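/- arXiv:1610.06310 — 2 statements merged into one kernel-verified Lean document; each statement's English description precedes it below -/
import Mathlib

section
/- Let f, g ∈ H₂ satisfy |f*(e^{iθ})| = |g*(e^{iθ})| for almost every θ ∈ [0, 2π), and suppose f is outer. Then there exists an inner function u ∈ H_∞ (|u*(e^{iθ})| = 1 a.e.) such that g = u·f on the unit disk. -/
open Complex MeasureTheory Filter Set

noncomputable def cm : Measure ℝ :=
  (ENNReal.ofReal (2 * Real.pi))⁻¹ • volume.restrict (Ioc 0 (2 * Real.pi))

noncomputable def ee (n : ℤ) (θ : ℝ) : ℂ := Complex.exp (n * (θ * Complex.I))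

noncomputable def rr (k : ℕ) : ℝ := 1 - 1 / ((k : ℝ) + 2)

lemma rr_pos (k : ℕ) : 0 < rr k := by
  have h : (1 : ℝ) / ((k : ℝ) + 2) < 1 := by
    rw [div_lt_one (by positivity)]
    have : (0 : ℝ) ≤ k := Nat.cast_nonneg k
    linarith
  unfold rr; linarith

lemma rr_lt (k : ℕ) : rr k < 1 := by
  have : (0 : ℝ) < 1 / ((k : ℝ) + 2) := by positivity
  unfold rr; linarith

lemma rr_mono {j k : ℕ} (h : k ≤ j) : rr k ≤ rr j := by
  have : (1 : ℝ) / ((j : ℝ) + 2) ≤ 1 / ((k : ℝ) + 2) := by gcongr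
  unfold rr; linarith

lemma rr_tendsto : Tendsto rr atTop (nhds 1) := by
  have h : Tendsto (fun k : ℕ => (1 : ℝ) / ((k : ℝ) + 2)) atTop (nhds 0) := by
    apply Tendsto.div_atTop tendsto_const_nhds
    exact tendsto_atTop_add_const_right _ _ tendsto_natCast_atTop_atTop
  have h2 := h.const_sub 1
  rw [sub_zero] at h2
  exact h2

lemma rr_tendsto' : Tendsto rr atTop (nhdsWithin 1 (Iio 1)) :=
  tendsto_nhdsWithin_iff.2 ⟨rr_tendsto, Eventually.of_forall fun k => rr_lt k⟩

instance cm_prob : IsProbabilityMeasure cm := by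
  constructor
  have : (0 : ℝ) < 2 * Real.pi := by positivity
  simp only [cm, Measure.smul_apply, Measure.restrict_apply_univ, Real.volume_Ioc, sub_zero,
    smul_eq_mul]
  exact ENNReal.inv_mul_cancel (by simpa using this) ENNReal.ofReal_ne_top

lemma ae_cm_iff {p : ℝ → Prop} :
    (∀ᵐ θ ∂cm, p θ) ↔ ∀ᵐ (θ : ℝ) ∂(volume.restrict (Ico (0 : ℝ) (2 * Real.pi))), p θ := by
  rw [Measure.restrict_congr_set (Ico_ae_eq_Ioc (μ := volume)), cm, 
    Measure.ae_ennreal_smul_measure_iff (by simp [ENNReal.mul_eq_top])]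

lemma integral_cm {E : Type*} [NormedAddCommGroup E] [NormedSpace ℝ E] (F : ℝ → E) :
    ∫ θ, F θ ∂cm = (2 * Real.pi)⁻¹ • ∫ θ in (0 : ℝ)..(2 * Real.pi), F θ := by
  have : (0 : ℝ) < 2 * Real.pi := by positivity
  rw [cm, integral_smul_measure, intervalIntegral.integral_of_le this.le, ENNReal.toReal_inv,
    ENNReal.toReal_ofReal this.le]

lemma integrable_cm {E : Type*} [NormedAddCommGroup E] [NormedSpace ℝ E] {F : ℝ → E}
    (h : IntervalIntegrable F volume 0 (2 * Real.pi)) : Integrable F cm := by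
  have : (0 : ℝ) < 2 * Real.pi := by positivity
  rw [intervalIntegrable_iff_integrableOn_Ioc_of_le this.le] at h
  exact Integrable.smul_measure h (by simp [Real.pi_pos])

lemma ee_cont (n : ℤ) : Continuous (ee n) := by unfold ee; fun_prop

lemma ee_norm (n : ℤ) (θ : ℝ) : ‖ee n θ‖ = 1 := by
  have : (n : ℂ) * (θ * Complex.I) = ((n * θ : ℝ) : ℂ) * Complex.I := by push_cast; ring
  rw [ee, this, Complex.norm_exp_ofReal_mul_I]

lemma ee_add (m n : ℤ) (θ : ℝ) : ee (m + n) θ = ee m θ * ee n θ := by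
  rw [ee, ee, ee, ← Complex.exp_add]; push_cast; ring_nf

lemma ee_nat (n : ℕ) (θ : ℝ) : ee n θ = Complex.exp (θ * Complex.I) ^ n := by
  rw [ee, ← Complex.exp_nat_mul]; simp

lemma ee_zero (θ : ℝ) : ee 0 θ = 1 := by simp [ee]

lemma ee_conj (n : ℤ) (θ : ℝ) : (starRingEnd ℂ) (ee n θ) = ee (-n) θ := by
  rw [ee, ee, ← Complex.exp_conj]; simp

lemma ee_integral (n : ℤ) : ∫ θ, ee n θ ∂cm = if n = 0 then 1 else 0 := by
  split_ifs with h
  · subst h; simp [ee]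
  · rw [integral_cm]
    have h0 : (n : ℂ) * Complex.I ≠ 0 := by simp [h]
    have : (fun θ : ℝ => ee n θ) = fun θ : ℝ => Complex.exp (n * Complex.I * θ) := by
      ext θ; rw [ee]; ring_nf
    rw [this, integral_exp_mul_complex h0]
    have : Complex.exp (n * Complex.I * ((2 * Real.pi : ℝ) : ℂ)) = 1 := by
      rw [Complex.exp_eq_one_iff]; exact ⟨n, by push_cast; ring⟩
    rw [this]; simp

/-- termwise integration -/
lemma lemK {c : ℕ → ℂ} (hc : Summable fun n => ‖c n‖) (s : ℕ → ℤ) {ψ : ℝ → ℂ}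
    (hψ : Integrable ψ cm) :
    HasSum (fun n => c n * ∫ θ, ee (s n) θ * ψ θ ∂cm)
      (∫ θ, (∑' n, c n * ee (s n) θ) * ψ θ ∂cm) := by
  have hi : ∀ n, Integrable (fun θ => c n * (ee (s n) θ * ψ θ)) cm := fun n =>
    (hψ.bdd_mul (ee_cont _).aestronglyMeasurable
      (Eventually.of_forall fun θ => (ee_norm (s n) θ).le)).const_mul _
  have := hasSum_integral_of_summable_integral_norm hi (by
    have : (fun n => ∫ θ, ‖c n * (ee (s n) θ * ψ θ)‖ ∂cm) =
        fun n => ‖c n‖ * ∫ θ, ‖ψ θ‖ ∂cm := by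
      ext n; rw [← integral_const_mul]; simp [ee_norm]
    rw [this]; exact hc.mul_right _)
  simp only [integral_const_mul] at this
  have e : (fun θ => (∑' n, c n * ee (s n) θ) * ψ θ) =
      fun θ => ∑' n, c n * (ee (s n) θ * ψ θ) := by
    ext θ
    rw [← tsum_mul_right]
    simp only [mul_assoc]
  rw [e]; exact this

lemma ser_cont {c : ℕ → ℂ} (hc : Summable fun n => ‖c n‖) (s : ℕ → ℤ) :
    Continuous (fun θ => ∑' n, c n * ee (s n) θ) := by
  refine continuous_tsum (fun n => (ee_cont _).const_smul (c n)) hc fun n θ => ?_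
  simp [ee_norm]

lemma ser_bound {c : ℕ → ℂ} (hc : Summable fun n => ‖c n‖) (s : ℕ → ℤ) (θ : ℝ) :
    ‖∑' n, c n * ee (s n) θ‖ ≤ ∑' n, ‖c n‖ := by
  refine tsum_of_norm_bounded hc.hasSum fun n => ?_
  simp [ee_norm]

lemma ser_int {c : ℕ → ℂ} (hc : Summable fun n => ‖c n‖) (s : ℕ → ℤ) :
    Integrable (fun θ => ∑' n, c n * ee (s n) θ) cm :=
  integrable_cm ((ser_cont hc s).intervalIntegrable _ _)

/-- Fourier coefficients of an absolutely convergent series -/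
lemma ser_coeff {c : ℕ → ℂ} (hc : Summable fun n => ‖c n‖) (n : ℕ) :
    ∫ θ, (∑' m, c m * ee m θ) * ee (-n) θ ∂cm = c n := by
  have h := lemK hc (fun m => (m : ℤ)) (integrable_cm ((ee_cont (-n)).intervalIntegrable _ _))
  rw [← h.tsum_eq, tsum_eq_single n]
  · simp [← ee_add, ee_zero]
  · intro m hm
    simp only [← ee_add, ee_integral]
    rw [if_neg (by omega), mul_zero]

lemma parseval {c : ℕ → ℂ} (hc : Summable fun n => ‖c n‖) :
    ∫ θ, ‖∑' n, c n * ee n θ‖ ^ 2 ∂cm = ∑' n, ‖c n‖ ^ 2 := by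
  have hi : Integrable (fun θ => (starRingEnd ℂ) (∑' n, c n * ee n θ)) cm :=
    integrable_cm ((Complex.continuous_conj.comp (ser_cont hc _)).intervalIntegrable _ _)
  have h := lemK hc (fun m => (m : ℤ)) hi
  have h1 : ∀ n : ℕ, ∫ θ, ee n θ * (starRingEnd ℂ) (∑' n, c n * ee n θ) ∂cm
      = (starRingEnd ℂ) (c n) := by
    intro n
    rw [← ser_coeff hc n, ← integral_conj]
    congr 1; ext θ
    rw [map_mul, ee_conj, neg_neg, mul_comm]
  simp only [h1, Complex.mul_conj] at h
  have h2 := h.tsum_eq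
  apply Complex.ofReal_injective
  rw [← integral_complex_ofReal, Complex.ofReal_tsum]
  simp only [Complex.normSq_eq_norm_sq] at h2
  exact h2.symm

lemma l1_le_l2 {F : ℝ → ℂ} (hF : Continuous F) :
    ∫ θ, ‖F θ‖ ∂cm ≤ Real.sqrt (∫ θ, ‖F θ‖ ^ 2 ∂cm) := by
  set M := ∫ θ, ‖F θ‖ ∂cm with hM
  have i1 : Integrable (fun θ => ‖F θ‖) cm := integrable_cm (hF.norm.intervalIntegrable _ _)
  have i2 : Integrable (fun θ => ‖F θ‖ ^ 2) cm :=
    integrable_cm ((hF.norm.pow 2).intervalIntegrable _ _)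
  apply Real.le_sqrt_of_sq_le
  have : ∫ θ, 2 * M * ‖F θ‖ ∂cm ≤ ∫ θ, (M ^ 2 + ‖F θ‖ ^ 2) ∂cm := by
    refine integral_mono (i1.const_mul _) ((integrable_const _).add i2) fun θ => ?_
    simp only
    nlinarith [sq_nonneg (M - ‖F θ‖)]
  rw [integral_const_mul, integral_add (integrable_const _) i2, ← hM] at this
  simp at this
  nlinarith

lemma ser_eq {f : ℂ → ℂ} {a : ℕ → ℂ}
    (hfa : ∀ z ∈ Metric.ball (0 : ℂ) 1, HasSum (fun n : ℕ => a n * z ^ n) (f z))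
    {r : ℝ} (h0 : 0 ≤ r) (h1 : r < 1) (θ : ℝ) :
    HasSum (fun n : ℕ => (a n * (r : ℂ) ^ n) * ee n θ)
      (f ((r : ℂ) * Complex.exp ((θ : ℂ) * Complex.I))) := by
  have hz : (r : ℂ) * Complex.exp ((θ : ℂ) * Complex.I) ∈ Metric.ball (0 : ℂ) 1 := by
    simp [Complex.norm_exp_ofReal_mul_I, abs_of_nonneg h0, h1]
  have := hfa _ hz
  convert this using 2 with n
  rw [ee_nat, mul_pow, mul_assoc]

lemma ser_summ {f : ℂ → ℂ} {a : ℕ → ℂ}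
    (hfa : ∀ z ∈ Metric.ball (0 : ℂ) 1, HasSum (fun n : ℕ => a n * z ^ n) (f z))
    {r : ℝ} (h0 : 0 ≤ r) (h1 : r < 1) :
    Summable (fun n : ℕ => ‖a n * (r : ℂ) ^ n‖) :=
  (hfa (r : ℂ) (by simp [abs_of_nonneg h0, h1])).summable.norm

lemma l1conv {f : ℂ → ℂ} {a : ℕ → ℂ} {fStar : ℝ → ℂ}
    (hfa : ∀ z ∈ Metric.ball (0 : ℂ) 1, HasSum (fun n : ℕ => a n * z ^ n) (f z))
    (ha2 : Summable fun n : ℕ => ‖a n‖ ^ 2)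
    (hS : ∀ᵐ (θ : ℝ) ∂cm, Tendsto (fun k : ℕ => f ((rr k : ℂ) * Complex.exp ((θ : ℂ) * Complex.I)))
        atTop (nhds (fStar θ))) :
    Integrable fStar cm ∧
    Tendsto (fun k : ℕ => ∫ θ, ‖f ((rr k : ℂ) * Complex.exp ((θ : ℂ) * Complex.I)) - fStar θ‖ ∂cm)
      atTop (nhds 0) := by
  set F : ℕ → ℝ → ℂ := fun k θ => f ((rr k : ℂ) * Complex.exp ((θ : ℂ) * Complex.I)) with hF
  have hs : ∀ k, Summable (fun n : ℕ => ‖a n * (rr k : ℂ) ^ n‖) := fun k =>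
    ser_summ hfa (rr_pos k).le (rr_lt k)
  have hFs : ∀ k, F k = fun θ => ∑' n : ℕ, (a n * (rr k : ℂ) ^ n) * ee n θ := fun k => by
    ext θ; exact (ser_eq hfa (rr_pos k).le (rr_lt k) θ).tsum_eq.symm
  have hFc : ∀ k, Continuous (F k) := fun k => by rw [hFs]; exact ser_cont (hs k) _
  have hFi : ∀ k, Integrable (F k) cm := fun k => by rw [hFs]; exact ser_int (hs k) _
  have hmeas : AEStronglyMeasurable fStar cm :=
    aestronglyMeasurable_of_tendsto_ae atTop (fun k => (hFc k).aestronglyMeasurable) hS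
  set S : ℕ → ℝ := fun k => ∑' n : ℕ, ‖a n‖ ^ 2 * (1 - rr k ^ n) ^ 2 with hSd
  have hp : ∀ k n : ℕ, 0 ≤ rr k ^ n ∧ rr k ^ n ≤ 1 := fun k n =>
    ⟨pow_nonneg (rr_pos k).le _, pow_le_one₀ (rr_pos k).le (rr_lt k).le⟩
  have hbd : ∀ k n : ℕ, ‖a n‖ ^ 2 * (1 - rr k ^ n) ^ 2 ≤ ‖a n‖ ^ 2 := fun k n => by
    have := hp k n
    have h2 : (1 - rr k ^ n) ^ 2 ≤ 1 := by nlinarith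
    nlinarith [sq_nonneg ‖a n‖]
  have hSsum : ∀ k, Summable fun n : ℕ => ‖a n‖ ^ 2 * (1 - rr k ^ n) ^ 2 := fun k =>
    Summable.of_nonneg_of_le (fun n => by positivity) (hbd k) ha2
  have hS0 : Tendsto S atTop (nhds 0) := by
    have := tendsto_tsum_of_dominated_convergence (𝓕 := atTop)
      (f := fun k n => ‖a n‖ ^ 2 * (1 - rr k ^ n) ^ 2) (g := fun _ : ℕ => (0 : ℝ)) ha2 (by
        intro n
        have h := (((rr_tendsto.pow n).const_sub 1).pow 2).const_mul (‖a n‖ ^ 2)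
        simpa using h) (Eventually.of_forall fun k n => by
          rw [Real.norm_of_nonneg (by positivity)]; exact hbd k n)
    simpa using this
  have key : ∀ k j, k ≤ j → ∫ θ, ‖F k θ - F j θ‖ ∂cm ≤ Real.sqrt (S k) := by
    intro k j hkj
    refine (l1_le_l2 (F := fun θ => F k θ - F j θ) ((hFc k).sub (hFc j))).trans (Real.sqrt_le_sqrt ?_)
    set c : ℕ → ℂ := fun n => a n * (rr k : ℂ) ^ n - a n * (rr j : ℂ) ^ n with hc
    have hcs : Summable fun n => ‖c n‖ :=
      Summable.of_nonneg_of_le (fun n => norm_nonneg _) (fun n => norm_sub_le _ _)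
        ((hs k).add (hs j))
    have e : ∀ θ, F k θ - F j θ = ∑' n : ℕ, c n * ee n θ := by
      intro θ
      have := (ser_eq hfa (rr_pos k).le (rr_lt k) θ).sub (ser_eq hfa (rr_pos j).le (rr_lt j) θ)
      rw [hF, ← this.tsum_eq]
      simp only [hc, sub_mul]
    simp only [e, parseval hcs]
    have hle : ∀ n, ‖c n‖ ^ 2 ≤ ‖a n‖ ^ 2 * (1 - rr k ^ n) ^ 2 := by
      intro n
      have e1 : c n = a n * ((rr k ^ n - rr j ^ n : ℝ) : ℂ) := by
        simp only [hc]; push_cast; ring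
      rw [e1, norm_mul, mul_pow, Complex.norm_real, Real.norm_eq_abs, sq_abs]
      have h1 : rr k ^ n ≤ rr j ^ n := pow_le_pow_left₀ (rr_pos k).le (rr_mono hkj) n
      have h2 := hp j n
      gcongr ?_ * ?_
      nlinarith
    exact Summable.tsum_le_tsum hle
      (Summable.of_nonneg_of_le (fun n => by positivity) hle (hSsum k)) (hSsum k)
  have key2 : ∀ k, ∫⁻ θ, ‖F k θ - fStar θ‖ₑ ∂cm ≤ ENNReal.ofReal (Real.sqrt (S k)) := by
    intro k
    calc ∫⁻ θ, ‖F k θ - fStar θ‖ₑ ∂cm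
        = ∫⁻ θ, liminf (fun j => ‖F k θ - F j θ‖ₑ) atTop ∂cm := by
          refine lintegral_congr_ae ?_
          filter_upwards [hS] with θ hθ
          exact ((hθ.const_sub (F k θ)).enorm).liminf_eq.symm
      _ ≤ liminf (fun j => ∫⁻ θ, ‖F k θ - F j θ‖ₑ ∂cm) atTop :=
          lintegral_liminf_le fun j => ((hFc k).sub (hFc j)).enorm.measurable
      _ ≤ liminf (fun _ : ℕ => ENNReal.ofReal (Real.sqrt (S k))) atTop := by
          refine liminf_le_liminf ?_
          filter_upwards [eventually_ge_atTop k] with j hj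
          rw [← ofReal_integral_norm_eq_lintegral_enorm
            (f := fun θ => F k θ - F j θ) ((hFi k).sub (hFi j))]
          exact ENNReal.ofReal_le_ofReal (key k j hj)
      _ = _ := liminf_const _
  have hdi : ∀ k, Integrable (fun θ => F k θ - fStar θ) cm := fun k =>
    ⟨(hFc k).aestronglyMeasurable.sub hmeas, lt_of_le_of_lt (key2 k) ENNReal.ofReal_lt_top⟩
  refine ⟨?_, ?_⟩
  · have := (hFi 0).sub (hdi 0)
    convert this using 1
    ext θ; simp
  · refine squeeze_zero (fun k => integral_nonneg fun θ => norm_nonneg _) (fun k => ?_)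
      (g := fun k => Real.sqrt (S k)) (by simpa using hS0.sqrt)
    rw [integral_norm_eq_lintegral_enorm (hdi k).1]
    exact ENNReal.toReal_le_of_le_ofReal (Real.sqrt_nonneg _) (key2 k)

lemma jensen {h : ℂ → ℂ} (hd : DifferentiableOn ℂ h (Metric.ball 0 1)) (h0 : h 0 ≠ 0)
    {r δ : ℝ} (hr0 : 0 < r) (hr1 : r < 1) (hδ : 0 < δ) :
    Real.log ‖h 0‖ ≤
      ∫ θ, Real.log (‖h ((r : ℂ) * Complex.exp ((θ : ℂ) * Complex.I))‖ + δ) ∂cm := by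
  have han : AnalyticOnNhd ℂ h (Metric.closedBall 0 |r|) :=
    (hd.analyticOnNhd Metric.isOpen_ball).mono
      (Metric.closedBall_subset_ball (by rwa [abs_of_pos hr0]))
  have hJ := han.circleAverage_log_norm hr0.ne' h0
  have hci : CircleIntegrable (fun z => Real.log ‖h z‖) 0 r :=
    (han.mono Metric.sphere_subset_closedBall).meromorphicOn.circleIntegrable_log_norm
  have hle : Real.log ‖h 0‖ ≤ Real.circleAverage (fun z => Real.log ‖h z‖) 0 r := by
    rw [hJ]
    have : 0 ≤ ∑ᶠ u, (MeromorphicOn.divisor h (Metric.closedBall 0 |r|) u : ℝ) *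
        Real.log (r * ‖0 - u‖⁻¹) := by
      refine finsum_nonneg fun u => ?_
      by_cases hu : u ∈ Metric.closedBall (0 : ℂ) |r|
      · have hD : (0 : ℤ) ≤ MeromorphicOn.divisor h (Metric.closedBall 0 |r|) u :=
          MeromorphicOn.AnalyticOnNhd.divisor_nonneg han u
        refine mul_nonneg (by exact_mod_cast hD) ?_
        by_cases hu0 : u = 0
        · simp [hu0]
        · have hup : 0 < ‖u‖ := norm_pos_iff.2 hu0
          have hur : ‖u‖ ≤ r := by simpa [abs_of_pos hr0] using hu
          refine Real.log_nonneg ?_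
          rw [zero_sub, norm_neg, ← div_eq_mul_inv, one_le_div hup]
          exact hur
      · rw [Function.locallyFinsuppWithin.apply_eq_zero_of_notMem _ hu]; simp
    linarith
  have hnz : h ⁻¹' {0}ᶜ ∈ codiscreteWithin (Metric.sphere (0 : ℂ) |r|) := by
    refine codiscreteWithin_mono Metric.sphere_subset_closedBall ?_
    exact han.preimage_zero_mem_codiscreteWithin (x := 0) h0 (by simp)
      ⟨Metric.nonempty_closedBall.mpr (abs_nonneg r), (convex_closedBall 0 |r|).isPreconnected⟩
  have hcg : Real.circleAverage (fun z => Real.log ‖h z‖) 0 r =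
      Real.circleAverage (fun z => min (Real.log ‖h z‖) (Real.log (‖h z‖ + δ))) 0 r := by
    refine Real.circleAverage_congr_codiscreteWithin ?_ hr0.ne'
    filter_upwards [hnz] with z hz
    have hz : 0 < ‖h z‖ := norm_pos_iff.2 hz
    exact (min_eq_left (Real.log_le_log hz (by linarith))).symm
  rw [hcg] at hle
  refine hle.trans ?_
  rw [Real.circleAverage_def, ← integral_cm]
  have hcont : Continuous fun θ : ℝ => h ((r : ℂ) * Complex.exp ((θ : ℂ) * Complex.I)) := by
    refine hd.continuousOn.comp_continuous (by fun_prop) fun θ => ?_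
    simp [Complex.norm_exp_ofReal_mul_I, abs_of_pos hr0, hr1]
  have hcm : ∀ θ : ℝ, circleMap 0 r θ = (r : ℂ) * Complex.exp ((θ : ℂ) * Complex.I) := by
    intro θ; simp [circleMap]
  have hci' := integrable_cm hci
  simp only [hcm] at hci' ⊢
  have hi2 : Integrable (fun θ : ℝ =>
      Real.log (‖h ((r : ℂ) * Complex.exp ((θ : ℂ) * Complex.I))‖ + δ)) cm :=
    integrable_cm (Continuous.intervalIntegrable
      ((hcont.norm.add continuous_const).log fun θ =>
        ne_of_gt (add_pos_of_nonneg_of_pos (norm_nonneg _) hδ)) _ _)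
  exact integral_mono (hci'.inf hi2) hi2 fun θ => min_le_right _ _

lemma log_ineq {x y δ : ℝ} (hx : 0 ≤ x) (hy : 0 ≤ y) (hδ : 0 < δ) :
    Real.log (x + δ) ≤ Real.log (y + δ) + |x - y| / δ := by
  have h1 : Real.log ((x + δ) / (y + δ)) ≤ (x + δ) / (y + δ) - 1 :=
    Real.log_le_sub_one_of_pos (by positivity)
  rw [Real.log_div (by positivity) (by positivity)] at h1
  have h2 : (x + δ) / (y + δ) - 1 = (x - y) / (y + δ) := by
    field_simp; ring
  have h3 : (x - y) / (y + δ) ≤ |x - y| / δ := by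
    calc (x - y) / (y + δ) ≤ |x - y| / (y + δ) := by gcongr; exact le_abs_self _
      _ ≤ |x - y| / δ := by gcongr; linarith
  linarith

lemma log_int {hStar : ℝ → ℂ} (hi : Integrable hStar cm) {δ : ℝ} (hδ : 0 < δ) :
    Integrable (fun θ => Real.log (‖hStar θ‖ + δ)) cm := by
  refine Integrable.mono' ((integrable_const |Real.log δ|).add (hi.norm.div_const δ))
    (Real.measurable_log.comp_aemeasurable
      (hi.1.norm.aemeasurable.add aemeasurable_const)).aestronglyMeasurable ?_
  refine Eventually.of_forall fun θ => ?_
  have h1 := log_ineq (norm_nonneg (hStar θ)) le_rfl hδ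
  rw [zero_add, sub_zero, abs_norm] at h1
  have h2 : Real.log δ ≤ Real.log (‖hStar θ‖ + δ) :=
    Real.log_le_log hδ (by linarith [norm_nonneg (hStar θ)])
  have h3 : 0 ≤ ‖hStar θ‖ / δ := by positivity
  simp only [Pi.add_apply, Real.norm_eq_abs]
  rw [abs_le]
  constructor
  · linarith [neg_abs_le (Real.log δ)]
  · linarith [le_abs_self (Real.log δ)]

lemma jensenStar {h : ℂ → ℂ} {hStar : ℝ → ℂ} (hd : DifferentiableOn ℂ h (Metric.ball 0 1))
    (h0 : h 0 ≠ 0) (hi : Integrable hStar cm)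
    (hc : Tendsto (fun k : ℕ =>
      ∫ θ, ‖h ((rr k : ℂ) * Complex.exp (((θ : ℝ) : ℂ) * Complex.I)) - hStar θ‖ ∂cm)
      atTop (nhds 0)) {δ : ℝ} (hδ : 0 < δ) :
    Real.log ‖h 0‖ ≤ ∫ θ, Real.log (‖hStar θ‖ + δ) ∂cm := by
  have hlim := (hc.div_const δ).const_add (∫ θ, Real.log (‖hStar θ‖ + δ) ∂cm)
  rw [zero_div, add_zero] at hlim
  refine ge_of_tendsto' hlim fun k => ?_
  refine (jensen hd h0 (rr_pos k) (rr_lt k) hδ).trans ?_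
  have hcont : Continuous fun θ : ℝ => h ((rr k : ℂ) * Complex.exp ((θ : ℂ) * Complex.I)) := by
    refine hd.continuousOn.comp_continuous (by fun_prop) fun θ => ?_
    simp [Complex.norm_exp_ofReal_mul_I, abs_of_pos (rr_pos k), rr_lt k]
  have hki := integrable_cm (hcont.intervalIntegrable 0 (2 * Real.pi))
  have hdi : Integrable (fun θ : ℝ =>
      ‖h ((rr k : ℂ) * Complex.exp ((θ : ℂ) * Complex.I)) - hStar θ‖ / δ) cm :=
    (hki.sub hi).norm.div_const δ
  rw [← integral_div, ← integral_add (log_int hi hδ) hdi]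
  refine integral_mono (log_int hki hδ)
    ((log_int hi hδ).add hdi) fun θ => ?_
  refine (log_ineq (norm_nonneg _) (norm_nonneg (hStar θ)) hδ).trans ?_
  refine add_le_add le_rfl (div_le_div_of_nonneg_right ?_ hδ.le)
  exact abs_norm_sub_norm_le _ _

lemma bdry_ne_zero {hStar : ℝ → ℂ} (hi : Integrable hStar cm) (L : ℝ)
    (hL : ∀ δ : ℝ, 0 < δ → L ≤ ∫ θ, Real.log (‖hStar θ‖ + δ) ∂cm) :
    (∀ᵐ θ ∂cm, hStar θ ≠ 0) ∧ Integrable (fun θ => Real.log ‖hStar θ‖) cm := by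
  set d : ℕ → ℝ := fun n => 1 / ((n : ℝ) + 1) with hdd
  have hd0 : ∀ n, 0 < d n := fun n => by positivity
  have hd1 : ∀ n, d n ≤ 1 := fun n => by
    simp only [hdd]
    rw [div_le_one (by positivity)]
    have : (0 : ℝ) ≤ n := Nat.cast_nonneg n
    linarith
  have hdl : Tendsto d atTop (nhds 0) := tendsto_one_div_add_atTop_nhds_zero_nat
  set G : ℕ → ℝ → ℝ := fun n θ => Real.log (‖hStar θ‖ + 1) - Real.log (‖hStar θ‖ + d n) with hG
  have hGi : ∀ n, Integrable (G n) cm := fun n => (log_int hi one_pos).sub (log_int hi (hd0 n))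
  have hG0 : ∀ n θ, 0 ≤ G n θ := fun n θ => by
    have := Real.log_le_log (add_pos_of_nonneg_of_pos (norm_nonneg (hStar θ)) (hd0 n))
      (by linarith [hd1 n] : ‖hStar θ‖ + d n ≤ ‖hStar θ‖ + 1)
    simp only [hG]; linarith
  set K := ∫ θ, Real.log (‖hStar θ‖ + 1) ∂cm - L with hK
  have hGK : ∀ n, ∫⁻ θ, ENNReal.ofReal (G n θ) ∂cm ≤ ENNReal.ofReal K := fun n => by
    rw [← ofReal_integral_eq_lintegral_ofReal (hGi n) (Eventually.of_forall (hG0 n))]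
    refine ENNReal.ofReal_le_ofReal ?_
    simp only [hG]
    rw [integral_sub (log_int hi one_pos) (log_int hi (hd0 n))]
    linarith [hL _ (hd0 n)]
  have hgm : ∀ n, AEMeasurable (fun θ => ENNReal.ofReal (G n θ)) cm := fun n =>
    (hGi n).1.aemeasurable.ennreal_ofReal
  have hfat : ∫⁻ θ, liminf (fun n => ENNReal.ofReal (G n θ)) atTop ∂cm ≤ ENNReal.ofReal K := by
    refine (lintegral_liminf_le' hgm).trans ?_
    calc _ ≤ liminf (fun _ : ℕ => ENNReal.ofReal K) atTop :=
          liminf_le_liminf (Eventually.of_forall hGK)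
      _ = _ := liminf_const _
  have hlm : AEMeasurable (fun θ => liminf (fun n => ENNReal.ofReal (G n θ)) atTop) cm := by
    simp only [liminf_eq_iSup_iInf_of_nat']
    exact AEMeasurable.iSup fun n => AEMeasurable.iInf fun i => hgm (i + n)
  have hne : ∀ᵐ θ ∂cm, hStar θ ≠ 0 := by
    filter_upwards [ae_lt_top' hlm (hfat.trans_lt ENNReal.ofReal_lt_top).ne] with θ hθ h0
    have ht : Tendsto (fun n => ENNReal.ofReal (G n θ)) atTop (nhds ⊤) := by
      refine ENNReal.tendsto_ofReal_nhds_top.2 ?_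
      simp only [hG, h0, norm_zero, zero_add, Real.log_one, zero_sub]
      refine tendsto_neg_atBot_atTop.comp ?_
      exact Real.tendsto_log_nhdsGT_zero.comp
        (tendsto_nhdsWithin_iff.2 ⟨hdl, Eventually.of_forall hd0⟩)
    rw [ht.liminf_eq] at hθ
    exact lt_irrefl _ hθ
  refine ⟨hne, ?_⟩
  have hm : AEStronglyMeasurable (fun θ => Real.log ‖hStar θ‖) cm :=
    (Real.measurable_log.comp_aemeasurable hi.1.norm.aemeasurable).aestronglyMeasurable
  have hD : Integrable (fun θ => Real.log (‖hStar θ‖ + 1) - Real.log ‖hStar θ‖) cm := by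
    refine ⟨(log_int hi one_pos).1.sub hm, ?_⟩
    refine lt_of_le_of_lt ?_ (hfat.trans_lt ENNReal.ofReal_lt_top)
    refine lintegral_mono_ae ?_
    filter_upwards [hne] with θ hθ
    have hp : 0 < ‖hStar θ‖ := norm_pos_iff.2 hθ
    have ht : Tendsto (fun n => G n θ) atTop
        (nhds (Real.log (‖hStar θ‖ + 1) - Real.log ‖hStar θ‖)) := by
      refine Tendsto.const_sub _ ?_
      refine Tendsto.log ?_ hp.ne'
      simpa using hdl.const_add ‖hStar θ‖
    rw [(ENNReal.tendsto_ofReal ht).liminf_eq, ← ofReal_norm, Real.norm_of_nonneg]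
    linarith [Real.log_le_log hp (by linarith : ‖hStar θ‖ ≤ ‖hStar θ‖ + 1)]
  have := (log_int hi one_pos).sub hD
  convert this using 1
  ext θ; simp

lemma star_le {hStar : ℝ → ℂ} (hi : Integrable hStar cm) (L : ℝ)
    (hL : ∀ δ : ℝ, 0 < δ → L ≤ ∫ θ, Real.log (‖hStar θ‖ + δ) ∂cm)
    (hne : ∀ᵐ θ ∂cm, hStar θ ≠ 0) (hl : Integrable (fun θ => Real.log ‖hStar θ‖) cm) :
    L ≤ ∫ θ, Real.log ‖hStar θ‖ ∂cm := by
  set d : ℕ → ℝ := fun n => 1 / ((n : ℝ) + 1) with hdd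
  have hd0 : ∀ n, 0 < d n := fun n => by positivity
  have hd1 : ∀ n, d n ≤ 1 := fun n => by
    simp only [hdd]
    rw [div_le_one (by positivity)]
    have : (0 : ℝ) ≤ n := Nat.cast_nonneg n
    linarith
  have hdl : Tendsto d atTop (nhds 0) := tendsto_one_div_add_atTop_nhds_zero_nat
  have ht : Tendsto (fun n => ∫ θ, Real.log (‖hStar θ‖ + d n) ∂cm) atTop
      (nhds (∫ θ, Real.log ‖hStar θ‖ ∂cm)) := by
    refine tendsto_integral_of_dominated_convergence
      (fun θ => |Real.log ‖hStar θ‖| + |Real.log (‖hStar θ‖ + 1)|)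
      (fun n => (log_int hi (hd0 n)).1) (hl.abs.add (log_int hi one_pos).abs) (fun n => ?_) ?_
    · filter_upwards [hne] with θ hθ
      have hp : 0 < ‖hStar θ‖ := norm_pos_iff.2 hθ
      have h1 := Real.log_le_log hp (by linarith [hd0 n] : ‖hStar θ‖ ≤ ‖hStar θ‖ + d n)
      have h2 := Real.log_le_log (by linarith [hd0 n] : 0 < ‖hStar θ‖ + d n)
        (by linarith [hd1 n] : ‖hStar θ‖ + d n ≤ ‖hStar θ‖ + 1)
      rw [Real.norm_eq_abs, abs_le]
      constructor
      · linarith [neg_abs_le (Real.log ‖hStar θ‖), abs_nonneg (Real.log (‖hStar θ‖ + 1))]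
      · linarith [le_abs_self (Real.log (‖hStar θ‖ + 1)), abs_nonneg (Real.log ‖hStar θ‖)]
    · filter_upwards [hne] with θ hθ
      refine Tendsto.log ?_ (norm_ne_zero_iff.2 hθ)
      simpa using hdl.const_add ‖hStar θ‖
  exact ge_of_tendsto' ht fun n => hL _ (hd0 n)

lemma diff_of_hasSum {f : ℂ → ℂ} {a : ℕ → ℂ}
    (hfa : ∀ z ∈ Metric.ball (0 : ℂ) 1, HasSum (fun n : ℕ => a n * z ^ n) (f z)) :
    DifferentiableOn ℂ f (Metric.ball 0 1) := by
  intro z hz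
  have hz1 : ‖z‖ < 1 := by simpa using hz
  obtain ⟨r, hr, hr1⟩ := exists_between hz1
  have hr0 : 0 ≤ r := (norm_nonneg z).trans hr.le
  have hd : DifferentiableOn ℂ (fun w : ℂ => ∑' n : ℕ, a n * w ^ n) (Metric.ball 0 r) := by
    refine differentiableOn_tsum_of_summable_norm (ser_summ hfa hr0 hr1)
      (fun n => by fun_prop) Metric.isOpen_ball fun n w hw => ?_
    have hw' : ‖w‖ ≤ r := by simpa using (Metric.mem_ball.1 hw).le
    rw [norm_mul, norm_mul, norm_pow, norm_pow, Complex.norm_real, Real.norm_of_nonneg hr0]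
    gcongr
  have hzr : z ∈ Metric.ball (0 : ℂ) r := by simpa using hr
  have hda := hd.differentiableAt (Metric.isOpen_ball.mem_nhds hzr)
  refine DifferentiableAt.differentiableWithinAt (hda.congr_of_eventuallyEq ?_)
  filter_upwards [Metric.isOpen_ball.mem_nhds hz] with w hw
  exact (hfa w hw).tsum_eq.symm

lemma coefflim {F : ℕ → ℝ → ℂ} {fStar ψ : ℝ → ℂ} (hF : ∀ k, Integrable (F k) cm)
    (hi : Integrable fStar cm)
    (hc : Tendsto (fun k => ∫ θ, ‖F k θ - fStar θ‖ ∂cm) atTop (nhds 0))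
    (hψ : AEStronglyMeasurable ψ cm) (hb : ∀ᵐ θ ∂cm, ‖ψ θ‖ ≤ 1) :
    Tendsto (fun k => ∫ θ, F k θ * ψ θ ∂cm) atTop (nhds (∫ θ, fStar θ * ψ θ ∂cm)) := by
  rw [tendsto_iff_norm_sub_tendsto_zero]
  refine squeeze_zero (fun k => norm_nonneg _) (fun k => ?_) hc
  rw [← integral_sub ((hF k).mul_bdd hψ hb) (hi.mul_bdd hψ hb)]
  refine norm_integral_le_of_norm_le ((hF k).sub hi).norm ?_
  filter_upwards [hb] with θ hθ
  rw [← sub_mul, norm_mul]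
  exact mul_le_of_le_one_right (norm_nonneg _) hθ

lemma kernel_pos {w : ℂ} (hw : ‖w‖ < 1) :
    ‖(1 - w)⁻¹ + (starRingEnd ℂ) w * (1 - (starRingEnd ℂ) w)⁻¹‖ =
      ((1 - w)⁻¹ + (starRingEnd ℂ) w * (1 - (starRingEnd ℂ) w)⁻¹).re := by
  have h1 : (1 - w) ≠ 0 := by
    intro h
    have : w = 1 := (sub_eq_zero.1 h).symm
    simp [this] at hw
  have h2 : (1 - (starRingEnd ℂ) w) ≠ 0 := by
    have := (map_ne_zero (starRingEnd ℂ)).2 h1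
    simpa using this
  have h3 : (1 - w)⁻¹ + (starRingEnd ℂ) w * (1 - (starRingEnd ℂ) w)⁻¹
      = (((1 - ‖w‖ ^ 2) / ‖1 - w‖ ^ 2 : ℝ) : ℂ) := by
    push_cast
    rw [← Complex.mul_conj', ← Complex.mul_conj', map_sub, map_one]
    field_simp
    ring
  have h4 : 0 ≤ (1 - ‖w‖ ^ 2) / ‖1 - w‖ ^ 2 := by
    have : 0 ≤ 1 - ‖w‖ ^ 2 := by nlinarith [norm_nonneg w]
    positivity
  rw [h3, Complex.norm_real, Real.norm_of_nonneg h4, Complex.ofReal_re]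

lemma u_bound {v : ℝ → ℂ} (hv : Integrable v cm) (hb : ∀ᵐ θ ∂cm, ‖v θ‖ ≤ 1)
    (h0 : ∀ n : ℕ, 1 ≤ n → ∫ θ, ee n θ * v θ ∂cm = 0) {z : ℂ} (hz : ‖z‖ < 1) :
    HasSum (fun n : ℕ => (∫ θ, ee (-n) θ * v θ ∂cm) * z ^ n)
      (∑' n : ℕ, (∫ θ, ee (-n) θ * v θ ∂cm) * z ^ n) ∧
    ‖∑' n : ℕ, (∫ θ, ee (-n) θ * v θ ∂cm) * z ^ n‖ ≤ 1 := by
  have hc1 : Summable fun n : ℕ => ‖z ^ n‖ := by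
    simpa using summable_geometric_of_lt_one (norm_nonneg z) hz
  have hc2 : Summable fun n : ℕ => ‖((starRingEnd ℂ) z) ^ (n + 1)‖ := by
    have := (summable_nat_add_iff 1).2 hc1
    simpa using this
  set A : ℝ → ℂ := fun θ => ∑' n : ℕ, z ^ n * ee (-n) θ with hA
  set B : ℝ → ℂ := fun θ => ∑' n : ℕ, ((starRingEnd ℂ) z) ^ (n + 1) * ee ((n + 1 : ℕ) : ℤ) θ with hB
  have key : ∀ ψ : ℝ → ℂ, Integrable ψ cm → (∀ n : ℕ, 1 ≤ n → ∫ θ, ee n θ * ψ θ ∂cm = 0) →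
      HasSum (fun n : ℕ => (∫ θ, ee (-n) θ * ψ θ ∂cm) * z ^ n)
        (∫ θ, (A θ + B θ) * ψ θ ∂cm) := by
    intro ψ hψ hψ0
    have k1 := lemK hc1 (fun n => -(n : ℤ)) hψ
    have k2 := lemK hc2 (fun n => ((n + 1 : ℕ) : ℤ)) hψ
    have k3 : ∫ θ, B θ * ψ θ ∂cm = 0 := by
      rw [hB, ← k2.tsum_eq]
      simp only [hψ0 _ (Nat.le_add_left 1 _), mul_zero, tsum_zero]
    have e : ∫ θ, (A θ + B θ) * ψ θ ∂cm = ∫ θ, A θ * ψ θ ∂cm := by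
      simp only [add_mul]
      rw [integral_add, k3, add_zero]
      · exact hψ.bdd_mul (ser_cont hc1 _).aestronglyMeasurable
          (Eventually.of_forall fun θ => ser_bound hc1 _ θ)
      · exact hψ.bdd_mul (ser_cont hc2 _).aestronglyMeasurable
          (Eventually.of_forall fun θ => ser_bound hc2 _ θ)
    rw [e]
    simpa only [mul_comm] using k1
  have kv := key v hv h0
  refine ⟨kv.summable.hasSum, ?_⟩
  rw [kv.tsum_eq]
  have hABi : Integrable (fun θ => A θ + B θ) cm := (ser_int hc1 _).add (ser_int hc2 _)
  have k1 : ∫ θ, (A θ + B θ) ∂cm = 1 := by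
    have := key (fun _ => 1) (integrable_const _) (fun n hn => by
      simp only [mul_one, ee_integral]
      rw [if_neg (by omega)])
    simp only [mul_one, ee_integral] at this
    rw [← this.tsum_eq, tsum_eq_single 0]
    · simp
    · intro n hn
      rw [if_neg (by omega), zero_mul]
  have hP : ∀ θ, ‖A θ + B θ‖ = (A θ + B θ).re := by
    intro θ
    set w := z * ee (-1) θ with hw
    have hw1 : ‖w‖ < 1 := by rw [hw, norm_mul, ee_norm, mul_one]; exact hz
    have hpow : ∀ n : ℕ, ee (-n) θ = ee (-1) θ ^ n := fun n => by
      rw [ee, ee, ← Complex.exp_nat_mul]; push_cast; ring_nf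
    have hpow2 : ∀ n : ℕ, ee n θ = ee 1 θ ^ n := fun n => by
      rw [ee, ee, ← Complex.exp_nat_mul]; push_cast; ring_nf
    have hcw : (starRingEnd ℂ) w = (starRingEnd ℂ) z * ee 1 θ := by
      rw [hw, map_mul, ee_conj, neg_neg]
    have eA : A θ = (1 - w)⁻¹ := by
      rw [← tsum_geometric_of_norm_lt_one hw1]
      simp only [hA, hpow, hw, mul_pow]
    have eB : B θ = (starRingEnd ℂ) w * (1 - (starRingEnd ℂ) w)⁻¹ := by
      rw [← tsum_geometric_of_norm_lt_one (by simpa using hw1), ← tsum_mul_left]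
      simp only [hB, hpow2, hcw]
      congr 1; ext n; ring
    rw [eA, eB]
    exact kernel_pos hw1
  calc ‖∫ θ, (A θ + B θ) * v θ ∂cm‖ ≤ ∫ θ, (A θ + B θ).re ∂cm := by
        refine norm_integral_le_of_norm_le hABi.re ?_
        filter_upwards [hb] with θ hθ
        rw [norm_mul]
        refine (mul_le_of_le_one_right (norm_nonneg _) hθ).trans ?_
        exact (hP θ).le
    _ = 1 := by
        have := integral_re hABi
        simp only [RCLike.re_to_complex] at this
        rw [this, k1, Complex.one_re]

lemma coeff_prod {f g : ℂ → ℂ} {a b : ℕ → ℂ} {fStar gStar v : ℝ → ℂ}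
    (hfa : ∀ z ∈ Metric.ball (0 : ℂ) 1, HasSum (fun n : ℕ => a n * z ^ n) (f z))
    (hgb : ∀ z ∈ Metric.ball (0 : ℂ) 1, HasSum (fun n : ℕ => b n * z ^ n) (g z))
    (hfi : Integrable fStar cm) (hgi : Integrable gStar cm)
    (hfc : Tendsto (fun k : ℕ =>
      ∫ θ, ‖f ((rr k : ℂ) * Complex.exp (((θ : ℝ) : ℂ) * Complex.I)) - fStar θ‖ ∂cm)
      atTop (nhds 0))
    (hgc : Tendsto (fun k : ℕ =>
      ∫ θ, ‖g ((rr k : ℂ) * Complex.exp (((θ : ℝ) : ℂ) * Complex.I)) - gStar θ‖ ∂cm)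
      atTop (nhds 0))
    (hv : Integrable v cm) (hb : ∀ᵐ θ ∂cm, ‖v θ‖ ≤ 1)
    (h0 : ∀ n : ℕ, 1 ≤ n → ∫ θ, ee n θ * v θ ∂cm = 0)
    (hvg : ∀ᵐ θ ∂cm, gStar θ = v θ * fStar θ) (n : ℕ) :
    b n = ∑ kl ∈ Finset.HasAntidiagonal.antidiagonal n, (∫ θ, ee (-kl.1) θ * v θ ∂cm) * a kl.2 := by
  have hs : ∀ {f : ℂ → ℂ} {a : ℕ → ℂ} (_ : ∀ z ∈ Metric.ball (0 : ℂ) 1,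
      HasSum (fun n : ℕ => a n * z ^ n) (f z)) (k : ℕ),
      (Summable fun n : ℕ => ‖a n * (rr k : ℂ) ^ n‖) ∧
      (fun θ : ℝ => f ((rr k : ℂ) * Complex.exp ((θ : ℂ) * Complex.I))) =
        fun θ => ∑' n : ℕ, (a n * (rr k : ℂ) ^ n) * ee n θ := fun h k =>
    ⟨ser_summ h (rr_pos k).le (rr_lt k), by
      ext θ; exact (ser_eq h (rr_pos k).le (rr_lt k) θ).tsum_eq.symm⟩
  have hrn : ∀ m : ℕ, Tendsto (fun k => (rr k : ℂ) ^ m) atTop (nhds 1) := fun m => by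
    have := ((Complex.continuous_ofReal.tendsto 1).comp rr_tendsto).pow m
    simpa using this
  have hem : AEStronglyMeasurable (ee (-n)) cm := (ee_cont _).aestronglyMeasurable
  have t1 : Tendsto (fun k => b n * (rr k : ℂ) ^ n) atTop
      (nhds (∫ θ, gStar θ * ee (-n) θ ∂cm)) := by
    have := coefflim (fun k => by rw [(hs hgb k).2]; exact ser_int (hs hgb k).1 _) hgi hgc hem
      (Eventually.of_forall fun θ => (ee_norm _ θ).le)
    refine this.congr fun k => ?_
    rw [← ser_coeff (hs hgb k).1 n]
    have := (hs hgb k).2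
    refine integral_congr_ae (Eventually.of_forall fun θ => ?_)
    exact congrArg (· * ee (-n) θ) (congrFun this θ)
  have t1' := (hrn n).const_mul (b n)
  rw [mul_one] at t1'
  rw [tendsto_nhds_unique t1' t1]
  have hψb : ∀ᵐ θ ∂cm, ‖v θ * ee (-n) θ‖ ≤ 1 := by
    filter_upwards [hb] with θ hθ
    rw [norm_mul, ee_norm, mul_one]; exact hθ
  have e1 : ∫ θ, gStar θ * ee (-n) θ ∂cm = ∫ θ, fStar θ * (v θ * ee (-n) θ) ∂cm := by
    refine integral_congr_ae ?_
    filter_upwards [hvg] with θ hθ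
    rw [hθ]; ring
  have hψi : Integrable (fun θ => v θ * ee (-n) θ) cm :=
    hv.mul_bdd hem (Eventually.of_forall fun θ => (ee_norm _ θ).le)
  rw [e1]
  have t2 := coefflim (fun k => by rw [(hs hfa k).2]; exact ser_int (hs hfa k).1 _) hfi hfc
      hψi.1 hψb
  have t3 : Tendsto (fun k => ∑ kl ∈ Finset.HasAntidiagonal.antidiagonal n,
      (∫ θ, ee (-kl.1) θ * v θ ∂cm) * (a kl.2 * (rr k : ℂ) ^ kl.2)) atTop
      (nhds (∑ kl ∈ Finset.HasAntidiagonal.antidiagonal n, (∫ θ, ee (-kl.1) θ * v θ ∂cm) * a kl.2)) := by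
    refine tendsto_finsetSum _ fun kl _ => Tendsto.const_mul _ ?_
    simpa using (hrn kl.2).const_mul (a kl.2)
  refine tendsto_nhds_unique t2 (t3.congr fun k => ?_)
  have hK := lemK (hs hfa k).1 (fun m => (m : ℤ)) hψi
  have e2 : ∫ θ, f ((rr k : ℂ) * Complex.exp (((θ : ℝ) : ℂ) * Complex.I)) *
      (v θ * ee (-n) θ) ∂cm = ∫ θ, (∑' m : ℕ, (a m * (rr k : ℂ) ^ m) * ee m θ) *
      (v θ * ee (-n) θ) ∂cm := by
    refine integral_congr_ae (Eventually.of_forall fun θ => ?_)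
    exact congrArg (· * (v θ * ee (-n) θ)) (congrFun (hs hfa k).2 θ)
  rw [e2, ← hK.tsum_eq]
  have e3 : ∀ m : ℕ, ∫ θ, ee m θ * (v θ * ee (-n) θ) ∂cm = ∫ θ, ee (m - n) θ * v θ ∂cm := by
    intro m
    congr 1; ext θ
    rw [sub_eq_add_neg, ee_add]; ring
  simp only [e3]
  rw [tsum_eq_sum (s := Finset.range (n + 1))]
  · rw [Finset.Nat.sum_antidiagonal_eq_sum_range_succ_mk, ← Finset.sum_range_reflect]
    refine Finset.sum_congr rfl fun m hm => ?_
    have hm' : m ≤ n := by simpa [Nat.lt_succ_iff] using hm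
    have i1 : n + 1 - 1 - m = n - m := by omega
    have i2 : n - (n - m) = m := by omega
    have i3 : (-((n - m : ℕ) : ℤ)) = m - n := by omega
    simp only [i1, i2, i3]
    ring
  · intro m hm
    have hm' : n + 1 ≤ m := by simpa using hm
    have := h0 (m - n) (by omega)
    rw [Nat.cast_sub (by omega)] at this
    rw [this, mul_zero]

lemma log_ptwise {β w : ℂ} (hβ : ‖β‖ ≤ 1 / 2) (hw : ‖w‖ = 1) :
    Real.log ‖1 + β * w‖ ≤ (β * w).re + ‖β‖ ^ 2 / 2 ∧ 1 / 2 ≤ ‖1 + β * w‖ ∧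
      ‖1 + β * w‖ ≤ 3 / 2 := by
  have hbw : ‖β * w‖ = ‖β‖ := by rw [norm_mul, hw, mul_one]
  have h1 : 1 / 2 ≤ ‖1 + β * w‖ := by
    have := norm_sub_norm_le (1 : ℂ) (-(β * w))
    rw [sub_neg_eq_add, norm_neg, hbw, norm_one] at this
    linarith
  have h2 : ‖1 + β * w‖ ≤ 3 / 2 := by
    have := norm_add_le (1 : ℂ) (β * w)
    rw [hbw, norm_one] at this
    linarith
  refine ⟨?_, h1, h2⟩
  have h3 : Real.log (‖1 + β * w‖ ^ 2) ≤ ‖1 + β * w‖ ^ 2 - 1 :=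
    Real.log_le_sub_one_of_pos (by positivity)
  rw [Real.log_pow] at h3
  have h4 : ‖1 + β * w‖ ^ 2 = 1 + 2 * (β * w).re + ‖β‖ ^ 2 := by
    rw [← hbw, Complex.sq_norm, Complex.sq_norm, Complex.normSq_apply, Complex.normSq_apply]
    simp only [Complex.add_re, Complex.add_im, Complex.one_re, Complex.one_im]
    ring
  push_cast at h3
  linarith

lemma moment_zero {f g : ℂ → ℂ} {fStar gStar v : ℝ → ℂ}
    (hfd : DifferentiableOn ℂ f (Metric.ball 0 1)) (hgd : DifferentiableOn ℂ g (Metric.ball 0 1))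
    (f0 : f 0 ≠ 0)
    (hfi : Integrable fStar cm) (hgi : Integrable gStar cm)
    (hfc : Tendsto (fun k : ℕ =>
      ∫ θ, ‖f ((rr k : ℂ) * Complex.exp (((θ : ℝ) : ℂ) * Complex.I)) - fStar θ‖ ∂cm)
      atTop (nhds 0))
    (hgc : Tendsto (fun k : ℕ =>
      ∫ θ, ‖g ((rr k : ℂ) * Complex.exp (((θ : ℝ) : ℂ) * Complex.I)) - gStar θ‖ ∂cm)
      atTop (nhds 0))
    (hne : ∀ᵐ θ ∂cm, fStar θ ≠ 0) (hfl : Integrable (fun θ => Real.log ‖fStar θ‖) cm)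
    (hlog : Real.log ‖f 0‖ = ∫ θ, Real.log ‖fStar θ‖ ∂cm)
    (hv : Integrable v cm) (hb : ∀ᵐ θ ∂cm, ‖v θ‖ = 1)
    (hvg : ∀ᵐ θ ∂cm, gStar θ = v θ * fStar θ) (n : ℕ) (hn : 1 ≤ n) :
    ∫ θ, ee n θ * v θ ∂cm = 0 := by
  set m := ∫ θ, ee n θ * v θ ∂cm with hm
  have hWi : Integrable (fun θ => ee n θ * v θ) cm :=
    hv.bdd_mul (ee_cont _).aestronglyMeasurable (Eventually.of_forall fun θ => (ee_norm _ θ).le)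
  have hW1 : ∀ᵐ θ ∂cm, ‖ee n θ * v θ‖ = 1 := by
    filter_upwards [hb] with θ hθ
    rw [norm_mul, ee_norm, hθ, mul_one]
  have hm1 : ‖m‖ ≤ 1 := by
    have := norm_integral_le_of_norm_le (integrable_const (μ := cm) (1 : ℝ))
      (hW1.mono fun θ h => h.le)
    simpa using this
  -- main inequality
  have main : ∀ β : ℂ, ‖β‖ ≤ 1 / 2 → 0 ≤ (β * m).re + ‖β‖ ^ 2 / 2 := by
    intro β hβ
    set h : ℂ → ℂ := fun z => f z + β * (z ^ n * g z) with hh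
    set hS : ℝ → ℂ := fun θ => fStar θ + β * (ee n θ * gStar θ) with hhS
    have hh0 : h 0 = f 0 := by simp [hh, zero_pow (by omega : n ≠ 0)]
    have hhd : DifferentiableOn ℂ h (Metric.ball 0 1) :=
      hfd.add (((differentiableOn_id.pow n).mul hgd).const_mul β)
    have heg : Integrable (fun θ => ee n θ * gStar θ) cm :=
      hgi.bdd_mul (ee_cont _).aestronglyMeasurable (Eventually.of_forall fun θ => (ee_norm _ θ).le)
    have hSi : Integrable hS cm := hfi.add (heg.const_mul β)
    have hcont : ∀ {f : ℂ → ℂ}, DifferentiableOn ℂ f (Metric.ball 0 1) → ∀ k,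
        Integrable (fun θ : ℝ => f ((rr k : ℂ) * Complex.exp ((θ : ℂ) * Complex.I))) cm := by
      intro f hd k
      have hcont : Continuous fun θ : ℝ => f ((rr k : ℂ) * Complex.exp ((θ : ℂ) * Complex.I)) := by
        refine hd.continuousOn.comp_continuous (by fun_prop) fun θ => ?_
        simp [Complex.norm_exp_ofReal_mul_I, abs_of_pos (rr_pos k), rr_lt k]
      exact integrable_cm (hcont.intervalIntegrable 0 (2 * Real.pi))
    have hconv : Tendsto (fun k : ℕ =>
        ∫ θ, ‖h ((rr k : ℂ) * Complex.exp (((θ : ℝ) : ℂ) * Complex.I)) - hS θ‖ ∂cm)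
        atTop (nhds 0) := by
      have hlim : Tendsto (fun k : ℕ =>
          (∫ θ, ‖f ((rr k : ℂ) * Complex.exp (((θ : ℝ) : ℂ) * Complex.I)) - fStar θ‖ ∂cm)
          + ((∫ θ, ‖g ((rr k : ℂ) * Complex.exp (((θ : ℝ) : ℂ) * Complex.I)) - gStar θ‖ ∂cm)
          + (1 - rr k ^ n) * ∫ θ, ‖gStar θ‖ ∂cm)) atTop (nhds 0) := by
        have h3 := ((rr_tendsto.pow n).const_sub 1).mul_const (∫ θ, ‖gStar θ‖ ∂cm)
        have := hfc.add (hgc.add h3)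
        simpa using this
      refine squeeze_zero (fun k => integral_nonneg fun θ => norm_nonneg _) (fun k => ?_) hlim
      have i1 := ((hcont hfd k).sub hfi).norm
      have i2 := ((hcont hgd k).sub hgi).norm
      have i3 := hgi.norm.const_mul (1 - rr k ^ n)
      rw [← integral_const_mul]
      have e2 := integral_add i2 i3
      have e1 := integral_add i1 (i2.add i3)
      simp only [Pi.add_apply, Pi.sub_apply] at e1 e2
      rw [← e2, ← e1]
      refine integral_mono_of_nonneg (Eventually.of_forall fun θ => norm_nonneg _)
        (i1.add (i2.add i3)) (Eventually.of_forall fun θ => ?_)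
      simp only [hh, hhS]
      set z := (rr k : ℂ) * Complex.exp ((θ : ℂ) * Complex.I) with hz
      have hzn : z ^ n = ((rr k ^ n : ℝ) : ℂ) * ee n θ := by
        rw [hz, mul_pow, ee_nat]; push_cast; ring
      have hr := pow_le_one₀ (n := n) (rr_pos k).le (rr_lt k).le
      have hr0 := pow_nonneg (rr_pos k).le n
      have ed : f z + β * (z ^ n * g z) - (fStar θ + β * (ee n θ * gStar θ)) =
          (f z - fStar θ) + (β * ee n θ) * (((rr k ^ n : ℝ) : ℂ) * (g z - gStar θ)
            - ((1 - rr k ^ n : ℝ) : ℂ) * gStar θ) := by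
        rw [hzn]; push_cast; ring
      rw [ed]
      refine (norm_add_le _ _).trans (add_le_add le_rfl ?_)
      rw [norm_mul, norm_mul β, ee_norm, mul_one]
      refine (mul_le_of_le_one_left (norm_nonneg _) (by linarith)).trans ?_
      refine (norm_sub_le _ _).trans (add_le_add ?_ ?_)
      · rw [norm_mul, Complex.norm_real, Real.norm_of_nonneg hr0]
        exact mul_le_of_le_one_left (norm_nonneg _) hr
      · rw [norm_mul, Complex.norm_real, Real.norm_of_nonneg (by linarith)]
    have hJ : ∀ δ : ℝ, 0 < δ → Real.log ‖h 0‖ ≤ ∫ θ, Real.log (‖hS θ‖ + δ) ∂cm := fun δ hδ =>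
      jensenStar hhd (by rw [hh0]; exact f0) hSi hconv hδ
    obtain ⟨hSne, hSl⟩ := bdry_ne_zero hSi _ hJ
    have h5 := star_le hSi _ hJ hSne hSl
    rw [hh0, hlog] at h5
    have hbound : Integrable (fun θ => (β * (ee n θ * v θ)).re + ‖β‖ ^ 2 / 2) cm :=
      (hWi.const_mul β).re.add (integrable_const _)
    have h6 : ∫ θ, Real.log ‖hS θ‖ ∂cm ≤
        ∫ θ, (Real.log ‖fStar θ‖ + ((β * (ee n θ * v θ)).re + ‖β‖ ^ 2 / 2)) ∂cm := by
      refine integral_mono_ae hSl (hfl.add hbound) ?_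
      filter_upwards [hne, hW1, hvg] with θ h1 h2 h3
      obtain ⟨k1, k2, k3⟩ := log_ptwise hβ h2
      have e : hS θ = fStar θ * (1 + β * (ee n θ * v θ)) := by
        simp only [hhS, h3]; ring
      simp only [e]
      rw [norm_mul, Real.log_mul (norm_ne_zero_iff.2 h1) (by linarith)]
      linarith
    rw [integral_add hfl hbound] at h6
    have h7 : ∫ θ, ((β * (ee n θ * v θ)).re + ‖β‖ ^ 2 / 2) ∂cm = (β * m).re + ‖β‖ ^ 2 / 2 := by
      have hre : Integrable (fun θ => (β * (ee n θ * v θ)).re) cm := (hWi.const_mul β).re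
      rw [integral_add hre (integrable_const _)]
      have := integral_re (hWi.const_mul β)
      simp only [RCLike.re_to_complex] at this
      rw [this, integral_const_mul]
      simp [hm]
    linarith
  have hβ : ‖-((starRingEnd ℂ) m) / 2‖ = ‖m‖ / 2 := by simp
  have h8 := main (-((starRingEnd ℂ) m) / 2) (by rw [hβ]; linarith)
  rw [hβ] at h8
  have h9 : (-((starRingEnd ℂ) m) / 2 * m).re = -(‖m‖ ^ 2) / 2 := by
    have : -((starRingEnd ℂ) m) / 2 * m = ((-(‖m‖ ^ 2) / 2 : ℝ) : ℂ) := by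
      push_cast; rw [← Complex.mul_conj']; ring
    rw [this, Complex.ofReal_re]
  rw [h9] at h8
  have : ‖m‖ = 0 := by nlinarith [norm_nonneg m]
  exact norm_eq_zero.1 this



/-- Let `f, g ∈ H₂` (Taylor coefficients `a`, `b` with `Σ |aₙ|² < ∞`,
`Σ |bₙ|² < ∞`) have radial boundary values `fStar`, `gStar` with
`|f*(e^{iθ})| = |g*(e^{iθ})|` a.e. on `[0, 2π)`, and suppose `f` is outer:
`|f 0| = exp((2π)⁻¹ ∫₀^{2π} log |f*(e^{iθ})| dθ)`.  Then there exists an inner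
function `u ∈ H_∞` (bounded analytic on the disk whose radial boundary values
have modulus `1` a.e.) such that `g = u·f` on the unit disk. -/
theorem exists_inner_factor
    (f g : ℂ → ℂ) (a b : ℕ → ℂ) (fStar gStar : ℝ → ℂ)
    (hfa : ∀ z ∈ Metric.ball (0 : ℂ) 1, HasSum (fun n : ℕ => a n * z ^ n) (f z))
    (hgb : ∀ z ∈ Metric.ball (0 : ℂ) 1, HasSum (fun n : ℕ => b n * z ^ n) (g z))
    (ha2 : Summable fun n : ℕ => ‖a n‖ ^ 2)
    (hb2 : Summable fun n : ℕ => ‖b n‖ ^ 2)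
    (hfStar : ∀ᵐ (θ : ℝ) ∂(volume.restrict (Ico (0 : ℝ) (2 * Real.pi))),
      Tendsto (fun r : ℝ => f ((r : ℂ) * Complex.exp ((θ : ℂ) * Complex.I)))
        (nhdsWithin 1 (Iio 1)) (nhds (fStar θ)))
    (hgStar : ∀ᵐ (θ : ℝ) ∂(volume.restrict (Ico (0 : ℝ) (2 * Real.pi))),
      Tendsto (fun r : ℝ => g ((r : ℂ) * Complex.exp ((θ : ℂ) * Complex.I)))
        (nhdsWithin 1 (Iio 1)) (nhds (gStar θ)))
    (hmod : ∀ᵐ (θ : ℝ) ∂(volume.restrict (Ico (0 : ℝ) (2 * Real.pi))),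
      ‖fStar θ‖ = ‖gStar θ‖)
    (houter : ‖f 0‖ =
      Real.exp ((2 * Real.pi)⁻¹ * ∫ θ in (0 : ℝ)..(2 * Real.pi), Real.log ‖fStar θ‖)) :
    ∃ u : ℂ → ℂ,
      DifferentiableOn ℂ u (Metric.ball (0 : ℂ) 1) ∧
      (∃ C : ℝ, ∀ z ∈ Metric.ball (0 : ℂ) 1, ‖u z‖ ≤ C) ∧
      (∃ uStar : ℝ → ℂ,
        (∀ᵐ (θ : ℝ) ∂(volume.restrict (Ico (0 : ℝ) (2 * Real.pi))),
          Tendsto (fun r : ℝ => u ((r : ℂ) * Complex.exp ((θ : ℂ) * Complex.I)))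
            (nhdsWithin 1 (Iio 1)) (nhds (uStar θ))) ∧
        (∀ᵐ (θ : ℝ) ∂(volume.restrict (Ico (0 : ℝ) (2 * Real.pi))),
          ‖uStar θ‖ = 1)) ∧
      ∀ z ∈ Metric.ball (0 : ℂ) 1, g z = u z * f z := by
  have hfS := ae_cm_iff.2 hfStar
  have hgS := ae_cm_iff.2 hgStar
  have hmd := ae_cm_iff.2 hmod
  obtain ⟨hfi, hfc⟩ := l1conv hfa ha2 (hfS.mono fun θ h => h.comp rr_tendsto')
  obtain ⟨hgi, hgc⟩ := l1conv hgb hb2 (hgS.mono fun θ h => h.comp rr_tendsto')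
  have hfd := diff_of_hasSum hfa
  have hgd := diff_of_hasSum hgb
  have f0 : f 0 ≠ 0 := by
    rw [← norm_ne_zero_iff, houter]; exact (Real.exp_pos _).ne'
  have hlog : Real.log ‖f 0‖ = ∫ θ, Real.log ‖fStar θ‖ ∂cm := by
    rw [houter, Real.log_exp, integral_cm, smul_eq_mul]
  obtain ⟨hne, hfl⟩ := bdry_ne_zero hfi _ fun δ hδ => jensenStar hfd f0 hfi hfc hδ
  set v : ℝ → ℂ := fun θ => gStar θ / fStar θ with hvdef
  have hb : ∀ᵐ θ ∂cm, ‖v θ‖ = 1 := by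
    filter_upwards [hne, hmd] with θ h1 h2
    rw [hvdef]
    simp only
    rw [norm_div, ← h2, div_self (norm_ne_zero_iff.2 h1)]
  have hb' : ∀ᵐ θ ∂cm, ‖v θ‖ ≤ 1 := hb.mono fun θ h => h.le
  have hvi : Integrable v cm :=
    Integrable.mono' (integrable_const (1 : ℝ))
      (hgi.1.aemeasurable.div hfi.1.aemeasurable).aestronglyMeasurable hb'
  have hvg : ∀ᵐ θ ∂cm, gStar θ = v θ * fStar θ := by
    filter_upwards [hne] with θ h1
    exact (div_mul_cancel₀ _ h1).symm
  have h0 := moment_zero hfd hgd f0 hfi hgi hfc hgc hne hfl hlog hvi hb hvg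
  set u : ℂ → ℂ := fun z => ∑' n : ℕ, (∫ θ, ee (-n) θ * v θ ∂cm) * z ^ n with hu
  have hub : ∀ z ∈ Metric.ball (0 : ℂ) 1,
      HasSum (fun n : ℕ => (∫ θ, ee (-n) θ * v θ ∂cm) * z ^ n) (u z) ∧ ‖u z‖ ≤ 1 := fun z hz =>
    u_bound hvi hb' h0 (by simpa using hz)
  have hguf : ∀ z ∈ Metric.ball (0 : ℂ) 1, g z = u z * f z := by
    intro z hz
    have hs1 := (hub z hz).1
    have hs2 := hfa z hz
    rw [← (hgb z hz).tsum_eq, ← hs1.tsum_eq, ← hs2.tsum_eq,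
      tsum_mul_tsum_eq_tsum_sum_antidiagonal_of_summable_norm hs1.summable.norm hs2.summable.norm]
    refine tsum_congr fun n => ?_
    rw [coeff_prod hfa hgb hfi hgi hfc hgc hvi hb' h0 hvg n, Finset.sum_mul]
    refine Finset.sum_congr rfl fun kl hkl => ?_
    rw [← Finset.HasAntidiagonal.mem_antidiagonal.1 hkl, pow_add]
    ring
  refine ⟨u, diff_of_hasSum fun z hz => (hub z hz).1, ⟨1, fun z hz => (hub z hz).2⟩,
    ⟨v, ?_, ae_cm_iff.1 hb⟩, hguf⟩
  refine ae_cm_iff.1 ?_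
  filter_upwards [hne, hfS, hgS] with θ h1 h2 h3
  refine (h3.div h2 h1).congr' ?_
  have hpos : ∀ᶠ r : ℝ in nhdsWithin 1 (Iio 1), r ∈ Ioo (0 : ℝ) 1 :=
    Ioo_mem_nhdsLT one_pos
  filter_upwards [hpos, h2.eventually_ne h1] with r hr hfr
  have hz : (r : ℂ) * Complex.exp ((θ : ℂ) * Complex.I) ∈ Metric.ball (0 : ℂ) 1 := by
    simp [Complex.norm_exp_ofReal_mul_I, abs_of_pos hr.1, hr.2]
  simp only [Pi.div_apply]
  rw [hguf _ hz, mul_div_cancel_right₀ _ hfr]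
end

section
/- Let F, G ∈ H₂^{d×d} satisfy F*(e^{iθ})(F*(e^{iθ}))^H = G*(e^{iθ})(G*(e^{iθ}))^H for almost every θ ∈ [0, 2π), and suppose F is outer (so that in particular det F(z) ≠ 0 for z ∈ 𝔻 and F(z) is invertible on 𝔻). Then the matrix function U(z) = F(z)^{-1} G(z), analytic on 𝔻, belongs to H_∞^{d×d} and is an inner matrix function: U*(e^{iθ})(U*(e^{iθ}))^H = I_d for almost every θ. -/
open Complex MeasureTheory Filter Set Matrix


lemma qi_dens (u : ℂ → ℝ) (hu : ContinuousOn u (Metric.sphere 0 1)) {ε : ℝ} (hε : 0 < ε) :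
    ∃ g : ℂ → ℂ, Differentiable ℂ g ∧ ∀ ζ ∈ Metric.sphere (0:ℂ) 1, |u ζ - (g ζ).re| < ε := by
  have : Fact (0 < 2 * Real.pi) := ⟨Real.two_pi_pos⟩
  let v : C(AddCircle (2 * Real.pi), ℂ) :=
    ⟨fun t => (u (AddCircle.toCircle t) : ℂ), by
      refine Complex.continuous_ofReal.comp ?_
      refine hu.comp_continuous (continuous_subtype_val.comp AddCircle.continuous_toCircle) ?_
      intro t; exact mem_sphere_zero_iff_norm.2 (Circle.norm_coe _)⟩
  have hv : v ∈ (Submodule.span ℂ (range <| @fourier (2 * Real.pi))).topologicalClosure := by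
    rw [span_fourier_closure_eq_top]; trivial
  obtain ⟨T, hT, hTv⟩ := Metric.mem_closure_iff.1 hv ε hε
  have key : ∃ g k : ℂ → ℂ, Differentiable ℂ g ∧ Differentiable ℂ k ∧
      ∀ t : AddCircle (2 * Real.pi), T t = g (AddCircle.toCircle t) +
        (starRingEnd ℂ) (k (AddCircle.toCircle t)) := by
    clear hTv
    induction hT using Submodule.span_induction with
    | mem x hx =>
      obtain ⟨n, rfl⟩ := hx
      obtain ⟨m, rfl | rfl⟩ := n.eq_nat_or_neg
      · refine ⟨fun z => z ^ m, fun _ => 0, by fun_prop, by fun_prop, fun t => ?_⟩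
        simp [fourier_apply, AddCircle.toCircle_nsmul]
      · refine ⟨fun _ => 0, fun z => z ^ m, by fun_prop, by fun_prop, fun t => ?_⟩
        simp [fourier_apply, AddCircle.toCircle_nsmul, AddCircle.toCircle_neg, ← Circle.coe_inv_eq_conj]
    | zero => exact ⟨fun _ => 0, fun _ => 0, by fun_prop, by fun_prop, fun t => by simp⟩
    | add x y _ _ hx hy =>
      obtain ⟨g, k, hg, hk, h⟩ := hx
      obtain ⟨g', k', hg', hk', h'⟩ := hy
      refine ⟨fun z => g z + g' z, fun z => k z + k' z, by fun_prop, by fun_prop, fun t => ?_⟩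
      simp [h, h']; ring
    | smul c x _ hx =>
      obtain ⟨g, k, hg, hk, h⟩ := hx
      refine ⟨fun z => c * g z, fun z => (starRingEnd ℂ) c * k z, by fun_prop, by fun_prop, fun t => ?_⟩
      simp [h]; ring
  obtain ⟨g, k, hg, hk, h⟩ := key
  refine ⟨fun z => g z + k z, by fun_prop, fun ζ hζ => ?_⟩
  obtain ⟨t, ht⟩ : ∃ t : AddCircle (2 * Real.pi), (AddCircle.toCircle t : ℂ) = ζ := by
    refine ⟨((arg ζ : ℝ) : AddCircle (2 * Real.pi)), ?_⟩
    have h1 : ‖ζ‖ = 1 := by simpa using hζ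
    rw [AddCircle.toCircle_apply_mk]
    rw [Circle.coe_exp]
    have := Complex.norm_mul_exp_arg_mul_I ζ
    rw [h1] at this
    have hp := Real.pi_ne_zero
    field_simp
    simpa using this
  have h2 := ContinuousMap.dist_apply_le_dist (f := v) (g := T) t
  have h3 := lt_of_le_of_lt h2 hTv
  rw [Complex.dist_eq] at h3
  have h4 := lt_of_le_of_lt (Complex.abs_re_le_norm _) h3
  rw [h] at h4
  simpa [v, ht] using h4

lemma qi_weight_cont {z : ℂ} (hz : z ∈ Metric.ball (0:ℂ) 1) :
    Continuous (fun θ : ℝ => poissonKernel 0 z (circleMap 0 1 θ)) := by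
  unfold poissonKernel
  have h : ∀ θ : ℝ, circleMap 0 1 θ - 0 - (z - 0) ≠ 0 := by
    intro θ h
    have h1 : circleMap 0 1 θ = z := by simpa [sub_eq_zero] using h
    have : ‖z‖ = 1 := by rw [← h1]; simp
    simp at hz; linarith
  refine Continuous.div (by fun_prop) (by fun_prop) (fun θ => ?_)
  exact pow_ne_zero 2 (norm_ne_zero_iff.2 (h θ))

lemma qi_weight_nonneg {z : ℂ} (hz : z ∈ Metric.ball (0:ℂ) 1) (θ : ℝ) :
    0 ≤ poissonKernel 0 z (circleMap 0 1 θ) := by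
  unfold poissonKernel
  have : ‖z‖ < 1 := by simpa using hz
  apply div_nonneg _ (by positivity)
  simp
  exact this.le

lemma qi_weight_le {z : ℂ} (hz : z ∈ Metric.ball (0:ℂ) 1) :
    ∃ K, ∀ θ : ℝ, poissonKernel 0 z (circleMap 0 1 θ) ≤ K := by
  refine ⟨(1 + ‖z - 0‖) / (1 - ‖z - 0‖), fun θ => ?_⟩
  have := re_herglotzRieszKernel_le (R := 1) (c := 0) (z := circleMap 0 1 θ) (w := z) (by simp) hz
  rw [poissonKernel_eq_re_herglotzRieszKernel]
  exact this

/-- Weighted Jensen inequality. -/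
lemma qi_jensen {h : ℂ → ℂ} (hh : DiffContOnCl ℂ h (Metric.ball 0 1)) {z : ℂ}
    (hz : z ∈ Metric.ball (0:ℂ) 1) {δ : ℝ} (hδ : 0 < δ) :
    ‖h z‖ ≤ Real.exp ((2 * Real.pi)⁻¹ * ∫ θ in (0:ℝ)..(2 * Real.pi),
      poissonKernel 0 z (circleMap 0 1 θ) * Real.log (‖h (circleMap 0 1 θ)‖ + δ)) := by
  have hcont : ContinuousOn h (Metric.sphere 0 1) := by
    have := hh.continuousOn
    rw [closure_ball _ one_ne_zero] at this
    exact this.mono Metric.sphere_subset_closedBall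
  have hpos : ∀ x : ℂ, 0 < ‖h x‖ + δ := fun x => by positivity
  set u : ℂ → ℝ := fun ζ => Real.log (‖h ζ‖ + δ) with hu_def
  have hu : ContinuousOn u (Metric.sphere 0 1) :=
    ContinuousOn.log (hcont.norm.add continuousOn_const) (fun x _ => (hpos x).ne')
  have hw := qi_weight_cont hz
  have huθ : Continuous (fun θ : ℝ => u (circleMap 0 1 θ)) :=
    hu.comp_continuous (continuous_circleMap 0 1) (fun θ => by simp)
  set J := (2 * Real.pi)⁻¹ * ∫ θ in (0:ℝ)..(2 * Real.pi),
      poissonKernel 0 z (circleMap 0 1 θ) * u (circleMap 0 1 θ) with hJ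
  have hP : ∀ g : ℂ → ℂ, Differentiable ℂ g → (g z).re = (2 * Real.pi)⁻¹ *
      ∫ θ in (0:ℝ)..(2 * Real.pi), poissonKernel 0 z (circleMap 0 1 θ) * (g (circleMap 0 1 θ)).re := by
    intro g hg
    have h1 := (hg.diffContOnCl (s := Metric.ball (0:ℂ) 1)).circleAverage_poissonKernel_smul hz
    rw [← h1, Real.circleAverage_def]
    have hint : IntervalIntegrable (fun θ => (poissonKernel 0 z • g) (circleMap 0 1 θ)) volume 0 (2*Real.pi) := by
      apply Continuous.intervalIntegrable
      have := hg.continuous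
      simp only [Pi.smul_apply', Complex.real_smul]
      fun_prop
    have h2 := Complex.reCLM.intervalIntegral_comp_comm hint
    simp only [Complex.reCLM_apply] at h2
    rw [Complex.smul_re, ← h2]
    simp
  have hone : (2 * Real.pi)⁻¹ * ∫ θ in (0:ℝ)..(2 * Real.pi), poissonKernel 0 z (circleMap 0 1 θ) = 1 := by
    have := hP (fun _ => 1) (by fun_prop)
    simpa using this.symm
  have main : ∀ ε > 0, ‖h z‖ ≤ Real.exp (J + 2 * ε) := by
    intro ε hε
    obtain ⟨g, hg, hgu⟩ := qi_dens u hu hε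
    have hb : ‖h z * Complex.exp (-g z)‖ ≤ Real.exp ε := by
      have hd : DiffContOnCl ℂ (fun z => h z * Complex.exp (-g z)) (Metric.ball 0 1) := by
        have h1 : Differentiable ℂ (fun z => Complex.exp (-g z)) := by fun_prop
        exact hh.smul h1.diffContOnCl
      refine Complex.norm_le_of_forall_mem_frontier_norm_le Metric.isBounded_ball hd ?_ (subset_closure hz)
      intro ζ hζ
      rw [frontier_ball _ one_ne_zero] at hζ
      have h1 := abs_lt.1 (hgu ζ hζ)
      rw [norm_mul, Complex.norm_exp]
      have h2 : ‖h ζ‖ ≤ Real.exp (u ζ) := by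
        rw [hu_def]; simp only; rw [Real.exp_log (hpos ζ)]; linarith
      calc _ ≤ Real.exp (u ζ) * Real.exp (-g ζ).re := by gcongr
        _ = Real.exp (u ζ - (g ζ).re) := by rw [← Real.exp_add]; simp [sub_eq_add_neg]
        _ ≤ _ := Real.exp_le_exp.2 h1.2.le
    have h3 : (g z).re ≤ J + ε := by
      rw [hP g hg, hJ]
      have hgc : Continuous (fun θ : ℝ => (g (circleMap 0 1 θ)).re) := by
        have := hg.continuous
        exact Complex.continuous_re.comp (this.comp (continuous_circleMap 0 1))
      have h5 : ∫ θ in (0:ℝ)..(2 * Real.pi), poissonKernel 0 z (circleMap 0 1 θ) * (g (circleMap 0 1 θ)).re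
          ≤ ∫ θ in (0:ℝ)..(2 * Real.pi), (poissonKernel 0 z (circleMap 0 1 θ) * u (circleMap 0 1 θ)
            + poissonKernel 0 z (circleMap 0 1 θ) * ε) := by
        apply intervalIntegral.integral_mono_on Real.two_pi_pos.le
        · exact (hw.mul hgc).intervalIntegrable _ _
        · exact ((hw.mul huθ).add (hw.mul continuous_const)).intervalIntegrable _ _
        · intro θ _
          have h1 := abs_lt.1 (hgu (circleMap 0 1 θ) (by simp))
          have h2 := qi_weight_nonneg hz θ
          rw [← mul_add]
          gcongr
          linarith
      have i1 : IntervalIntegrable (fun θ => poissonKernel 0 z (circleMap 0 1 θ) * u (circleMap 0 1 θ))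
        volume 0 (2 * Real.pi) := (hw.mul huθ).intervalIntegrable _ _
      have i2 : IntervalIntegrable (fun θ => poissonKernel 0 z (circleMap 0 1 θ) * ε)
        volume 0 (2 * Real.pi) := (hw.mul continuous_const).intervalIntegrable _ _
      rw [intervalIntegral.integral_add i1 i2, intervalIntegral.integral_mul_const] at h5
      have := mul_le_mul_of_nonneg_left h5 (inv_nonneg.2 Real.two_pi_pos.le)
      rw [mul_add, ← mul_assoc _ _ ε, hone, one_mul] at this
      exact this
    rw [norm_mul, Complex.norm_exp, Complex.neg_re, Real.exp_neg, ← div_eq_mul_inv,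
      div_le_iff₀ (Real.exp_pos _), ← Real.exp_add] at hb
    exact hb.trans (Real.exp_le_exp.2 (by linarith))
  have hlim : Tendsto (fun ε : ℝ => Real.exp (J + 2 * ε)) (nhdsWithin 0 (Ioi 0)) (nhds (Real.exp J)) := by
    have : Continuous (fun ε : ℝ => Real.exp (J + 2 * ε)) := by fun_prop
    have := this.tendsto 0
    simp only [mul_zero, add_zero] at this
    exact this.mono_left nhdsWithin_le_nhds
  exact ge_of_tendsto hlim (by filter_upwards [self_mem_nhdsWithin] with ε hε using main ε hε)

lemma qi_vitali {α : Type*} [MeasurableSpace α] {μ : Measure α} [IsFiniteMeasure μ]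
    {b : ℕ → α → ℝ} {b' : α → ℝ} {S : ℕ → α → ℝ} {K : ℝ}
    (hb : ∀ n, AEStronglyMeasurable (b n) μ) (hS : ∀ n, Integrable (S n) μ)
    (hS0 : ∀ n x, 0 ≤ S n x) (hK : ∀ n, ∫ x, S n x ∂μ ≤ K)
    (hdom : ∀ ε > 0, ∃ C, 0 ≤ C ∧ ∀ n x, |b n x| ≤ C + ε * S n x)
    (hlim : ∀ᵐ x ∂μ, Tendsto (fun n => b n x) atTop (nhds (b' x))) :
    Integrable b' μ ∧ Tendsto (fun n => ∫ x, b n x ∂μ) atTop (nhds (∫ x, b' x ∂μ)) := by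
  have hK0 : 0 ≤ K := (integral_nonneg (hS0 0)).trans (hK 0)
  have hbint : ∀ n, Integrable (b n) μ := by
    intro n
    obtain ⟨C, hC, h⟩ := hdom 1 one_pos
    exact Integrable.mono' ((integrable_const C).add ((hS n).const_mul 1)) (hb n)
      (Eventually.of_forall (h n))
  have hUI : UnifIntegrable b 1 μ := by
    intro ε hε
    obtain ⟨C, hC, h⟩ := hdom (ε / (2 * (K + 1))) (by positivity)
    refine ⟨ε / (2 * (C + 1)), by positivity, fun n s hs hμs => ?_⟩
    rw [eLpNorm_indicator_eq_eLpNorm_restrict hs, eLpNorm_one_eq_lintegral_enorm,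
      ← ofReal_integral_norm_eq_lintegral_enorm ((hbint n).integrableOn)]
    apply ENNReal.ofReal_le_ofReal
    have hμ : μ.real s ≤ ε / (2 * (C + 1)) := ENNReal.toReal_le_of_le_ofReal (by positivity) hμs
    calc ∫ x in s, ‖b n x‖ ∂μ ≤ ∫ x in s, (C + ε / (2 * (K + 1)) * S n x) ∂μ := by
          apply integral_mono (hbint n).integrableOn.norm
          · exact (integrable_const C).add ((hS n).integrableOn.const_mul _)
          · intro x; exact h n x
      _ = μ.real s * C + ε / (2 * (K + 1)) * ∫ x in s, S n x ∂μ := by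
          rw [integral_add (integrable_const C) ((hS n).integrableOn.const_mul _), integral_const_mul]
          simp
      _ ≤ ε / (2 * (C + 1)) * (C + 1) + ε / (2 * (K + 1)) * (K + 1) := by
          have h1 : ∫ x in s, S n x ∂μ ≤ K + 1 :=
            (setIntegral_le_integral (hS n) (Eventually.of_forall (hS0 n))).trans
              ((hK n).trans (by linarith))
          gcongr
          linarith
      _ = ε := by field_simp; norm_num
  have hb' : Integrable b' μ := by
    refine UniformIntegrable.integrable_of_ae_tendsto (f := b) (u := atTop) ⟨hb, hUI, ?_⟩ hlim
    obtain ⟨C, hC, h⟩ := hdom 1 one_pos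
    refine ⟨(C * μ.real univ + K).toNNReal, fun n => ?_⟩
    rw [eLpNorm_one_eq_lintegral_enorm,
      ← ofReal_integral_norm_eq_lintegral_enorm (hbint n)]
    apply ENNReal.ofReal_le_ofReal
    calc ∫ x, ‖b n x‖ ∂μ ≤ ∫ x, (C + 1 * S n x) ∂μ := by
          apply integral_mono (hbint n).norm
          · exact (integrable_const C).add ((hS n).const_mul _)
          · intro x; exact h n x
      _ = C * μ.real univ + ∫ x, S n x ∂μ := by
          rw [integral_add (integrable_const C) ((hS n).const_mul _), integral_const_mul]
          simp [mul_comm]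
      _ ≤ _ := by gcongr; exact hK n
  refine ⟨hb', ?_⟩
  have := tendsto_Lp_finite_of_tendsto_ae le_rfl ENNReal.one_ne_top hb
    (memLp_one_iff_integrable.2 hb') hUI hlim
  exact tendsto_integral_of_L1' b' hb'.1 (Eventually.of_forall hbint) this

lemma qi_log_bound {S h C δ : ℝ} {m : ℕ} (hδ : 0 < δ) (hS : 0 ≤ S) (h0 : 0 ≤ h) (hC : 0 ≤ C)
    (hh : h ≤ C * (1 + S) ^ m) {ε : ℝ} (hε : 0 < ε) :
    |Real.log (h + δ)| ≤ (|Real.log δ| + |Real.log (C + δ)| + m * |ε - 1 - Real.log ε|) + (m * ε) * S := by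
  have hp : 1 ≤ (1 + S) ^ m := one_le_pow₀ (by linarith)
  have h1 : Real.log (1 + S) ≤ ε * (1 + S) - 1 - Real.log ε := by
    have := Real.log_le_sub_one_of_pos (show 0 < ε * (1 + S) by positivity)
    rw [Real.log_mul hε.ne' (by positivity)] at this
    linarith
  have h2 : Real.log (h + δ) ≤ Real.log (C + δ) + m * Real.log (1 + S) := by
    rw [← Real.log_pow, ← Real.log_mul (by positivity) (by positivity)]
    apply Real.log_le_log (by positivity)
    nlinarith
  have h3 : Real.log δ ≤ Real.log (h + δ) := Real.log_le_log hδ (by linarith)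
  have h4 : (m:ℝ) * Real.log (1 + S) ≤ m * (|ε - 1 - Real.log ε| + ε * S) := by
    gcongr
    have := le_abs_self (ε - 1 - Real.log ε)
    linarith
  have h5 := le_abs_self (Real.log (C + δ))
  have h6 := neg_abs_le (Real.log δ)
  have h7 : 0 ≤ (m:ℝ) * |ε - 1 - Real.log ε| := by positivity
  have h8 : 0 ≤ (m:ℝ) * ε * S := by positivity
  have h9 := abs_nonneg (Real.log δ)
  have h10 := abs_nonneg (Real.log (C+δ))
  rw [abs_le]
  constructor <;> linarith

def QIS (S : ℂ → ℝ) : Prop :=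
  ContinuousOn S (Metric.ball 0 1) ∧ (∀ z, 0 ≤ S z) ∧
    ∃ K, ∀ r : ℝ, 0 ≤ r → r < 1 → ∫ θ in (0:ℝ)..(2 * Real.pi), S (r * circleMap 0 1 θ) ≤ K

def QIGood (S : ℂ → ℝ) (h : ℂ → ℂ) (hs : ℝ → ℂ) : Prop :=
  DifferentiableOn ℂ h (Metric.ball 0 1) ∧
  (∀ᵐ θ : ℝ ∂(volume.restrict (Ioc (0:ℝ) (2 * Real.pi))),
    Tendsto (fun r : ℝ => h (r * circleMap 0 1 θ)) (nhdsWithin 1 (Iio 1)) (nhds (hs θ))) ∧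
  ∃ (C : ℝ) (m : ℕ) (r0 : ℝ), 0 ≤ C ∧ 0 ≤ r0 ∧ r0 < 1 ∧
    ∀ z ∈ Metric.ball (0:ℂ) 1, r0 ≤ ‖z‖ → ‖h z‖ ≤ C * (1 + S z) ^ m

lemma qi_mem {r : ℝ} (h0 : 0 ≤ r) (h1 : r < 1) (θ : ℝ) :
    (r : ℂ) * circleMap 0 1 θ ∈ Metric.ball (0:ℂ) 1 := by
  simp [abs_of_nonneg h0, h1]

lemma qi_limit {S : ℂ → ℝ} (hS : QIS S) {h : ℂ → ℂ} {hs : ℝ → ℂ} (hh : QIGood S h hs) :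
    AEStronglyMeasurable hs (volume.restrict (Ioc (0:ℝ) (2 * Real.pi))) ∧
    ∃ r : ℕ → ℝ, (∀ n, 0 ≤ r n) ∧ (∀ n, r n < 1) ∧ Tendsto r atTop (nhds 1) ∧
    ∀ w : ℝ → ℝ, Continuous w → (∃ W, ∀ θ, |w θ| ≤ W) → ∀ δ > 0,
    IntervalIntegrable (fun θ => w θ * Real.log (‖hs θ‖ + δ)) volume 0 (2 * Real.pi) ∧
    Tendsto (fun n => ∫ θ in (0:ℝ)..(2 * Real.pi),
      w θ * Real.log (‖h (r n * circleMap 0 1 θ)‖ + δ)) atTop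
      (nhds (∫ θ in (0:ℝ)..(2 * Real.pi), w θ * Real.log (‖hs θ‖ + δ))) := by
  obtain ⟨hd, hlim, C, m, r0, hC, hr00, hr01, hbd⟩ := hh
  obtain ⟨hSc, hS0, K, hK⟩ := hS
  let r : ℕ → ℝ := fun n => 1 - (1 - r0) * (1 / ((n:ℝ) + 1))
  have hq : ∀ n : ℕ, 0 < 1 / ((n:ℝ) + 1) ∧ 1 / ((n:ℝ) + 1) ≤ 1 := fun n =>
    ⟨by positivity, by rw [div_le_one (by positivity)]; linarith [Nat.cast_nonneg (α := ℝ) n]⟩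
  have hr0 : ∀ n, r0 ≤ r n := fun n => by
    have := hq n; simp only [r]; nlinarith
  have hr0' : ∀ n, 0 ≤ r n := fun n => hr00.trans (hr0 n)
  have hr1 : ∀ n, r n < 1 := fun n => by
    have := hq n; simp only [r]; nlinarith
  have hrl : Tendsto r atTop (nhds 1) := by
    have := (tendsto_one_div_add_atTop_nhds_zero_nat (𝕜 := ℝ)).const_mul (1 - r0)
    have := this.const_sub 1
    simpa [r] using this
  have hrl' : Tendsto r atTop (nhdsWithin 1 (Iio 1)) :=
    tendsto_nhdsWithin_iff.2 ⟨hrl, Eventually.of_forall hr1⟩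
  have hmapc : ∀ n, Continuous (fun θ : ℝ => (r n : ℂ) * circleMap 0 1 θ) := fun n => by fun_prop
  have hhc : ∀ n, Continuous (fun θ : ℝ => h (r n * circleMap 0 1 θ)) := fun n =>
    hd.continuousOn.comp_continuous (hmapc n) (fun θ => qi_mem (hr0' n) (hr1 n) θ)
  have hSc' : ∀ n, Continuous (fun θ : ℝ => S (r n * circleMap 0 1 θ)) := fun n =>
    hSc.comp_continuous (hmapc n) (fun θ => qi_mem (hr0' n) (hr1 n) θ)
  refine ⟨?_, r, hr0', hr1, hrl, ?_⟩
  · refine aestronglyMeasurable_of_tendsto_ae atTop (f := fun n θ => h (r n * circleMap 0 1 θ))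
      (fun n => (hhc n).aestronglyMeasurable) ?_
    filter_upwards [hlim] with θ hθ using hθ.comp hrl'
  · rintro w hw ⟨W, hW⟩ δ hδ
    have hpos : ∀ x : ℂ, ‖x‖ + δ ≠ 0 := fun x => by positivity
    have hcn : ∀ n, Continuous (fun θ => w θ * Real.log (‖h (r n * circleMap 0 1 θ)‖ + δ)) := fun n =>
      hw.mul (((hhc n).norm.add continuous_const).log (fun θ => hpos _))
    have hW0 : 0 ≤ W := (abs_nonneg _).trans (hW 0)
    simp only [intervalIntegrable_iff_integrableOn_Ioc_of_le Real.two_pi_pos.le,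
      intervalIntegral.integral_of_le Real.two_pi_pos.le]
    refine qi_vitali (S := fun n θ => S (r n * circleMap 0 1 θ)) (K := K)
      (fun n => (hcn n).aestronglyMeasurable) (fun n => ?_) (fun n θ => hS0 _) (fun n => ?_) ?_ ?_
    · exact ((hSc' n).integrableOn_Icc).mono_set Ioc_subset_Icc_self
    · rw [← intervalIntegral.integral_of_le Real.two_pi_pos.le]
      exact hK (r n) (hr0' n) (hr1 n)
    · intro ε hε
      set ε' := ε / ((W + 1) * (m + 1)) with hε'
      have hε'0 : 0 < ε' := by positivity
      refine ⟨W * (|Real.log δ| + |Real.log (C + δ)| + m * |ε' - 1 - Real.log ε'|), by positivity, ?_⟩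
      intro n θ
      have hz := qi_mem (hr0' n) (hr1 n) θ
      have h1 := qi_log_bound hδ (hS0 _) (norm_nonneg _) hC (hbd _ hz (by
        simp [abs_of_nonneg (hr0' n), hr0 n])) hε'0
      rw [abs_mul]
      calc _ ≤ W * ((|Real.log δ| + |Real.log (C + δ)| + m * |ε' - 1 - Real.log ε'|)
            + (m * ε') * S (r n * circleMap 0 1 θ)) := by
              apply mul_le_mul (hW θ) h1 (abs_nonneg _) hW0
        _ = W * (|Real.log δ| + |Real.log (C + δ)| + m * |ε' - 1 - Real.log ε'|)
            + (W * m * ε') * S (r n * circleMap 0 1 θ) := by ring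
        _ ≤ _ := by
          gcongr
          · exact hS0 _
          · calc W * m * ε' ≤ (W + 1) * (m + 1) * ε' := by gcongr <;> linarith
              _ = ε := by rw [hε']; field_simp
    · filter_upwards [hlim] with θ hθ
      have := hθ.comp hrl'
      exact ((this.norm.add_const δ).log (hpos _)).const_mul (w θ)

lemma qi_scale {h : ℂ → ℂ} (hd : DifferentiableOn ℂ h (Metric.ball 0 1)) {r : ℝ} (h0 : 0 ≤ r)
    (h1 : r < 1) : ∀ z ∈ Metric.closedBall (0:ℂ) 1, AnalyticAt ℂ (fun z => h (r * z)) z := by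
  intro z hz
  have hz' : (r:ℂ) * z ∈ Metric.ball (0:ℂ) 1 := by
    simp [abs_of_nonneg h0] at hz ⊢
    nlinarith [norm_nonneg z]
  have := hd.analyticAt (Metric.isOpen_ball.mem_nhds hz')
  exact this.fun_comp (f := fun z => (r:ℂ) * z) (by fun_prop)

lemma qi_scale_tendsto {h : ℂ → ℂ} (hd : DifferentiableOn ℂ h (Metric.ball 0 1)) {r : ℕ → ℝ}
    (hr : Tendsto r atTop (nhds 1)) {z : ℂ} (hz : z ∈ Metric.ball (0:ℂ) 1) :
    Tendsto (fun n => h (r n * z)) atTop (nhds (h z)) := by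
  have h1 : ContinuousAt h z := (hd.differentiableAt (Metric.isOpen_ball.mem_nhds hz)).continuousAt
  have h2 : Tendsto (fun n => (r n : ℂ) * z) atTop (nhds z) := by
    have := ((Complex.continuous_ofReal.tendsto 1).comp hr).mul_const z
    simpa using this
  exact h1.tendsto.comp h2

lemma qi_upper {S : ℂ → ℝ} (hS : QIS S) {h : ℂ → ℂ} {hs : ℝ → ℂ} (hh : QIGood S h hs)
    {z : ℂ} (hz : z ∈ Metric.ball (0:ℂ) 1) {δ : ℝ} (hδ : 0 < δ) :
    ‖h z‖ ≤ Real.exp ((2 * Real.pi)⁻¹ * ∫ θ in (0:ℝ)..(2 * Real.pi),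
      poissonKernel 0 z (circleMap 0 1 θ) * Real.log (‖hs θ‖ + δ)) := by
  obtain ⟨-, r, hr0, hr1, hrl, H⟩ := qi_limit hS hh
  obtain ⟨K, hK⟩ := qi_weight_le hz
  have H1 := (H _ (qi_weight_cont hz) ⟨K, fun θ => by
    rw [abs_of_nonneg (qi_weight_nonneg hz θ)]; exact hK θ⟩ δ hδ).2
  refine le_of_tendsto_of_tendsto' (qi_scale_tendsto hh.1 hrl hz).norm
    ((Real.continuous_exp.tendsto _).comp (H1.const_mul _)) (fun n => ?_)
  have hdc : DiffContOnCl ℂ (fun z => h (r n * z)) (Metric.ball 0 1) := by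
    apply DifferentiableOn.diffContOnCl
    rw [closure_ball _ one_ne_zero]
    intro x hx
    exact (qi_scale hh.1 (hr0 n) (hr1 n) x hx).differentiableAt.differentiableWithinAt
  exact qi_jensen hdc hz hδ

lemma qi_poisson_zero (θ : ℝ) : poissonKernel 0 0 (circleMap 0 1 θ) = 1 := by
  simp [poissonKernel]

lemma qi_lower {S : ℂ → ℝ} (hS : QIS S) {h : ℂ → ℂ} {hs : ℝ → ℂ} (hh : QIGood S h hs)
    (hne : ∀ z ∈ Metric.ball (0:ℂ) 1, h z ≠ 0)
    {z : ℂ} (hz : z ∈ Metric.ball (0:ℂ) 1) {δ : ℝ} (hδ : 0 < δ) {K : ℝ}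
    (hK : ∀ θ : ℝ, poissonKernel 0 z (circleMap 0 1 θ) ≤ K) :
    K * Real.log ‖h 0‖ - Real.log ‖h z‖ ≤ (2 * Real.pi)⁻¹ * ∫ θ in (0:ℝ)..(2 * Real.pi),
      (K - poissonKernel 0 z (circleMap 0 1 θ)) * Real.log (‖hs θ‖ + δ) := by
  obtain ⟨-, r, hr0, hr1, hrl, H⟩ := qi_limit hS hh
  have hwc := qi_weight_cont hz
  have hwc' : Continuous (fun θ : ℝ => K - poissonKernel 0 z (circleMap 0 1 θ)) := by fun_prop
  have H1 := (H (fun θ => K - poissonKernel 0 z (circleMap 0 1 θ)) hwc' ⟨K, fun θ => by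
    rw [abs_of_nonneg (by linarith [hK θ])]; linarith [qi_weight_nonneg hz θ]⟩ δ hδ).2
  have hl := ((qi_scale_tendsto hh.1 hrl hz).norm.log (norm_ne_zero_iff.2 (hne z hz))).const_sub
    (K * Real.log ‖h 0‖)
  refine le_of_tendsto_of_tendsto' hl (H1.const_mul _) (fun n => ?_)
  have hn0 : ∀ ζ ∈ Metric.closedBall (0:ℂ) 1, h (r n * ζ) ≠ 0 := by
    intro ζ hζ
    apply hne
    have := hr1 n
    have := hr0 n
    simp [abs_of_nonneg (hr0 n)] at hζ ⊢
    nlinarith [norm_nonneg ζ]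
  have hP : ∀ x ∈ Metric.ball (0:ℂ) 1, (2 * Real.pi)⁻¹ * ∫ θ in (0:ℝ)..(2 * Real.pi),
      poissonKernel 0 x (circleMap 0 1 θ) * Real.log ‖h (r n * circleMap 0 1 θ)‖
      = Real.log ‖h (r n * x)‖ := by
    intro x hx
    have hharm : InnerProductSpace.HarmonicOnNhd (fun z => Real.log ‖h (r n * z)‖)
        (Metric.closedBall 0 1) := fun ζ hζ =>
      (qi_scale hh.1 (hr0 n) (hr1 n) ζ hζ).harmonicAt_log_norm (hn0 ζ hζ)
    have := hharm.circleAverage_poissonKernel_smul hx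
    rw [Real.circleAverage_def] at this
    simpa using this
  have h0 := hP 0 (by simp)
  have h1 := hP z hz
  simp only [qi_poisson_zero, one_mul, mul_zero] at h0
  have hhc : Continuous (fun θ : ℝ => h (r n * circleMap 0 1 θ)) :=
    hh.1.continuousOn.comp_continuous (by fun_prop) (fun θ => qi_mem (hr0 n) (hr1 n) θ)
  have hhn : ∀ θ, h (r n * circleMap 0 1 θ) ≠ 0 := fun θ => hn0 _ (by simp)
  have hlc : Continuous (fun θ : ℝ => Real.log ‖h (r n * circleMap 0 1 θ)‖) :=
    hhc.norm.log (fun θ => norm_ne_zero_iff.2 (hhn θ))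
  have hlc' : Continuous (fun θ : ℝ => Real.log (‖h (r n * circleMap 0 1 θ)‖ + δ)) :=
    (hhc.norm.add continuous_const).log (fun θ => (add_pos_of_nonneg_of_pos (norm_nonneg _) hδ).ne')
  have i1 : IntervalIntegrable (fun θ : ℝ => K * Real.log ‖h (r n * circleMap 0 1 θ)‖) volume 0
    (2 * Real.pi) := (continuous_const.mul hlc).intervalIntegrable _ _
  have i2 : IntervalIntegrable (fun θ : ℝ => poissonKernel 0 z (circleMap 0 1 θ) *
    Real.log ‖h (r n * circleMap 0 1 θ)‖) volume 0
    (2 * Real.pi) := (hwc.mul hlc).intervalIntegrable _ _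
  rw [← h0, ← h1, mul_left_comm, ← intervalIntegral.integral_const_mul, ← mul_sub,
    ← intervalIntegral.integral_sub i1 i2]
  gcongr
  apply intervalIntegral.integral_mono_on Real.two_pi_pos.le (i1.sub i2)
  · exact (hwc'.mul hlc').intervalIntegrable _ _
  · intro θ _
    rw [← sub_mul]
    gcongr
    · linarith [hK θ]
    · exact norm_pos_iff.2 (hhn θ)
    · linarith

lemma qi_delta {fs : ℝ → ℂ} {c : ℝ}
    (hm : AEStronglyMeasurable fs (volume.restrict (Ioc (0:ℝ) (2 * Real.pi))))
    (hi : ∀ δ > 0, IntervalIntegrable (fun θ => Real.log (‖fs θ‖ + δ)) volume 0 (2 * Real.pi))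
    (hc : ∀ δ > 0, c ≤ ∫ θ in (0:ℝ)..(2 * Real.pi), Real.log (‖fs θ‖ + δ)) :
    (∀ᵐ θ ∂(volume.restrict (Ioc (0:ℝ) (2 * Real.pi))), fs θ ≠ 0) ∧
    Tendsto (fun n : ℕ => ∫ θ in (0:ℝ)..(2 * Real.pi), Real.log (‖fs θ‖ + 1 / ((n:ℝ) + 1))) atTop
      (nhds (∫ θ in (0:ℝ)..(2 * Real.pi), Real.log ‖fs θ‖)) := by
  simp only [intervalIntegrable_iff_integrableOn_Ioc_of_le Real.two_pi_pos.le,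
      intervalIntegral.integral_of_le Real.two_pi_pos.le] at *
  set μ := volume.restrict (Ioc (0:ℝ) (2 * Real.pi)) with hμ
  have hq : ∀ n : ℕ, 0 < 1 / ((n:ℝ) + 1) ∧ 1 / ((n:ℝ) + 1) ≤ 1 := fun n =>
    ⟨by positivity, by rw [div_le_one (by positivity)]; linarith [Nat.cast_nonneg (α := ℝ) n]⟩
  have hql := tendsto_one_div_add_atTop_nhds_zero_nat (𝕜 := ℝ)
  have hi1 : Integrable (fun θ => Real.log (‖fs θ‖ + 1)) μ := hi 1 one_pos
  have hin : ∀ n : ℕ, Integrable (fun θ => Real.log (‖fs θ‖ + 1 / ((n:ℝ) + 1))) μ :=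
    fun n => hi _ (hq n).1
  let φ : ℕ → ℝ → ENNReal := fun n θ =>
    ENNReal.ofReal (Real.log (‖fs θ‖ + 1) - Real.log (‖fs θ‖ + 1 / ((n:ℝ) + 1)))
  have hφm : ∀ n, AEMeasurable (φ n) μ := fun n =>
    (hi1.aestronglyMeasurable.aemeasurable.sub
      (hin n).aestronglyMeasurable.aemeasurable).ennreal_ofReal
  let Φ : ℝ → ENNReal := fun θ => if fs θ = 0 then ⊤ else
    ENNReal.ofReal (Real.log (‖fs θ‖ + 1) - Real.log ‖fs θ‖)
  have hlim : ∀ θ, Tendsto (fun n => φ n θ) atTop (nhds (Φ θ)) := by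
    intro θ
    by_cases h : fs θ = 0
    · simp only [φ, Φ, h, if_true, norm_zero, zero_add, Real.log_one, zero_sub]
      apply ENNReal.tendsto_ofReal_nhds_top.2
      rw [tendsto_neg_atTop_iff]
      apply Real.tendsto_log_nhdsGT_zero.comp
      exact tendsto_nhdsWithin_iff.2 ⟨hql, Eventually.of_forall fun n => (hq n).1⟩
    · simp only [φ, Φ, h, if_false]
      apply ENNReal.tendsto_ofReal
      apply Tendsto.const_sub
      have h1 : Tendsto (fun n : ℕ => ‖fs θ‖ + 1 / ((n:ℝ) + 1)) atTop (nhds ‖fs θ‖) := by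
        simpa using hql.const_add ‖fs θ‖
      exact h1.log (norm_ne_zero_iff.2 h)
  have hΦm : AEMeasurable Φ μ :=
    aemeasurable_of_tendsto_metrizable_ae atTop hφm (Eventually.of_forall hlim)
  have hφint : ∀ n, ∫⁻ θ, φ n θ ∂μ ≤ ENNReal.ofReal (∫ θ, Real.log (‖fs θ‖ + 1) ∂μ - c) := by
    intro n
    simp only [φ]
    have hsub : Integrable (fun θ => Real.log (‖fs θ‖ + 1) - Real.log (‖fs θ‖ + 1 / ((n:ℝ) + 1))) μ :=
      hi1.sub (hin n)
    rw [← ofReal_integral_eq_lintegral_ofReal hsub, integral_sub hi1 (hin n)]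
    · apply ENNReal.ofReal_le_ofReal
      linarith [hc _ (hq n).1]
    · refine Eventually.of_forall fun θ => ?_
      have := hq n
      simp only [Pi.zero_apply, sub_nonneg]
      apply Real.log_le_log
      · have := norm_nonneg (fs θ); linarith
      · linarith
  have hΦint : ∫⁻ θ, Φ θ ∂μ < ⊤ := by
    have h1 := lintegral_liminf_le' hφm (u := atTop)
    have h2 : ∀ θ, liminf (fun n => φ n θ) atTop = Φ θ := fun θ => (hlim θ).liminf_eq
    simp only [h2] at h1
    refine lt_of_le_of_lt (h1.trans ?_) (ENNReal.ofReal_lt_top (r := ∫ θ, Real.log (‖fs θ‖ + 1) ∂μ - c))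
    refine liminf_le_of_frequently_le' (Frequently.of_forall hφint)
  have hne : ∀ᵐ θ ∂μ, fs θ ≠ 0 := by
    filter_upwards [ae_lt_top' hΦm hΦint.ne] with θ hθ h
    simp [Φ, h] at hθ
  refine ⟨hne, ?_⟩
  have hm1 : AEStronglyMeasurable (fun θ => Real.log ‖fs θ‖) μ :=
    (hm.norm.aemeasurable.log).aestronglyMeasurable
  have hdiff : Integrable (fun θ => Real.log (‖fs θ‖ + 1) - Real.log ‖fs θ‖) μ := by
    refine ⟨hi1.aestronglyMeasurable.sub hm1, ?_⟩
    rw [hasFiniteIntegral_iff_norm]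
    refine lt_of_le_of_lt (lintegral_mono_ae ?_) hΦint
    filter_upwards [hne] with θ hθ
    simp only [Φ, hθ, if_false]
    rw [Real.norm_of_nonneg]
    have := norm_pos_iff.2 hθ
    exact sub_nonneg.2 (Real.log_le_log this (by linarith))
  have hi0 : Integrable (fun θ => Real.log ‖fs θ‖) μ := by
    refine (hi1.sub hdiff).congr (Eventually.of_forall fun θ => ?_)
    simp
  refine tendsto_integral_of_dominated_convergence
    (fun θ => |Real.log (‖fs θ‖ + 1)| + |Real.log ‖fs θ‖|) (fun n => (hin n).aestronglyMeasurable)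
    (hi1.abs.add hi0.abs) (fun n => ?_) ?_
  · filter_upwards [hne] with θ hθ
    have h0 := norm_pos_iff.2 hθ
    have h1 := hq n
    have h2 : Real.log ‖fs θ‖ ≤ Real.log (‖fs θ‖ + 1 / ((n:ℝ) + 1)) :=
      Real.log_le_log h0 (by linarith)
    have h3 : Real.log (‖fs θ‖ + 1 / ((n:ℝ) + 1)) ≤ Real.log (‖fs θ‖ + 1) :=
      Real.log_le_log (by linarith) (by linarith)
    rw [Real.norm_eq_abs, abs_le]
    have h4 := neg_abs_le (Real.log ‖fs θ‖)
    have h5 := le_abs_self (Real.log (‖fs θ‖ + 1))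
    have h6 := abs_nonneg (Real.log ‖fs θ‖)
    have h7 := abs_nonneg (Real.log (‖fs θ‖ + 1))
    constructor <;> linarith
  · filter_upwards [hne] with θ hθ
    have h1 : Tendsto (fun n : ℕ => ‖fs θ‖ + 1 / ((n:ℝ) + 1)) atTop (nhds ‖fs θ‖) := by
      simpa using hql.const_add ‖fs θ‖
    exact h1.log (norm_ne_zero_iff.2 hθ)

def QIOuter (f : ℂ → ℂ) (fs : ℝ → ℂ) : Prop :=
  ‖f 0‖ = Real.exp ((2 * Real.pi)⁻¹ * ∫ θ in (0 : ℝ)..(2 * Real.pi), Real.log ‖fs θ‖)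

lemma qi_int {S : ℂ → ℝ} (hS : QIS S) {f : ℂ → ℂ} {fs : ℝ → ℂ} (hf : QIGood S f fs)
    {δ : ℝ} (hδ : 0 < δ) :
    IntervalIntegrable (fun θ => Real.log (‖fs θ‖ + δ)) volume 0 (2 * Real.pi) := by
  obtain ⟨-, r, hr0, hr1, hrl, H⟩ := qi_limit hS hf
  simpa using (H (fun _ => 1) continuous_const ⟨1, fun _ => by simp⟩ δ hδ).1

lemma qi_outer_lim {S : ℂ → ℝ} (hS : QIS S) {f : ℂ → ℂ} {fs : ℝ → ℂ} (hf : QIGood S f fs)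
    (ho : QIOuter f fs) :
    (∀ᵐ θ ∂(volume.restrict (Ioc (0:ℝ) (2 * Real.pi))), fs θ ≠ 0) ∧
    Tendsto (fun n : ℕ => (2 * Real.pi)⁻¹ *
      ∫ θ in (0:ℝ)..(2 * Real.pi), Real.log (‖fs θ‖ + 1 / ((n:ℝ) + 1))) atTop
      (nhds (Real.log ‖f 0‖)) := by
  have hf0 : 0 < ‖f 0‖ := by rw [ho]; exact Real.exp_pos _
  obtain ⟨h1, h2⟩ := qi_delta (c := 2 * Real.pi * Real.log ‖f 0‖) (qi_limit hS hf).1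
    (fun δ hδ => qi_int hS hf hδ) (fun δ hδ => by
      have := qi_upper hS hf (z := 0) (by simp) hδ
      simp only [qi_poisson_zero, one_mul] at this
      rw [← Real.log_le_iff_le_exp hf0, inv_mul_eq_div, le_div_iff₀' Real.two_pi_pos] at this
      exact this)
  refine ⟨h1, ?_⟩
  have h3 := h2.const_mul (2 * Real.pi)⁻¹
  rw [show Real.log ‖f 0‖ = _ from by rw [ho, Real.log_exp]]
  exact h3

lemma qi_circle_norm (a : ℂ) (θ : ℝ) :
    ‖1 - (starRingEnd ℂ) a * circleMap 0 1 θ‖ = ‖circleMap 0 1 θ - a‖ := by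
  set ζ := circleMap 0 1 θ with hζ
  have h1 : ‖ζ‖ = 1 := by simp [hζ]
  have h2 : ζ * (starRingEnd ℂ) ζ = 1 := by
    rw [Complex.mul_conj, Complex.normSq_eq_norm_sq, h1]; simp
  have : 1 - (starRingEnd ℂ) a * ζ = ζ * (starRingEnd ℂ) (ζ - a) := by
    rw [map_sub, mul_sub, h2]; ring
  rw [this, norm_mul, h1, one_mul, Complex.norm_conj]

lemma qi_zero_free {S : ℂ → ℝ} (hS : QIS S) {f : ℂ → ℂ} {fs : ℝ → ℂ} (hf : QIGood S f fs)
    (ho : QIOuter f fs) : ∀ a ∈ Metric.ball (0:ℂ) 1, f a ≠ 0 := by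
  intro a ha hfa
  have hf0 : 0 < ‖f 0‖ := by rw [ho]; exact Real.exp_pos _
  have ha1 : ‖a‖ < 1 := by simpa using ha
  have hq : DifferentiableOn ℂ (dslope f a) (Metric.ball 0 1) :=
    (Complex.differentiableOn_dslope (Metric.isOpen_ball.mem_nhds ha)).2 hf.1
  have hfq : ∀ z, f z = (z - a) * dslope f a z := by
    intro z
    have := sub_smul_dslope f a z
    rw [hfa, sub_zero, smul_eq_mul] at this
    exact this.symm
  let g : ℂ → ℂ := fun z => dslope f a z * (1 - (starRingEnd ℂ) a * z)
  have hg' : ∀ z, z ≠ a → g z = f z * ((1 - (starRingEnd ℂ) a * z) / (z - a)) := by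
    intro z hz
    have : z - a ≠ 0 := sub_ne_zero.2 hz
    simp only [g, hfq z]; field_simp
  let gs : ℝ → ℂ := fun θ => fs θ * ((1 - (starRingEnd ℂ) a * circleMap 0 1 θ) / (circleMap 0 1 θ - a))
  have hζa : ∀ θ, circleMap 0 1 θ - a ≠ 0 := by
    intro θ h
    have : ‖circleMap 0 1 θ‖ = ‖a‖ := by rw [sub_eq_zero.1 h]
    simp at this; linarith
  have hgs : ∀ θ, ‖gs θ‖ = ‖fs θ‖ := by
    intro θ
    simp only [gs]
    rw [norm_mul, norm_div, qi_circle_norm, div_self (norm_ne_zero_iff.2 (hζa θ)), mul_one]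
  have hg : QIGood S g gs := by
    obtain ⟨hd, hlim, C, m, r0, hC, hr00, hr01, hbd⟩ := hf
    refine ⟨?_, ?_, C * (2 / ((1 - ‖a‖) / 2)), m, max r0 ((1 + ‖a‖) / 2), ?_, ?_, ?_, ?_⟩
    · exact hq.mul (by fun_prop)
    · filter_upwards [hlim] with θ hθ
      have hid : Tendsto (fun r : ℝ => (r:ℂ) * circleMap 0 1 θ) (nhdsWithin 1 (Iio 1))
          (nhds (circleMap 0 1 θ)) := by
        have h : Continuous (fun r : ℝ => (r:ℂ) * circleMap 0 1 θ) := by fun_prop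
        have := h.tendsto 1
        simp only [ofReal_one, one_mul] at this
        exact this.mono_left nhdsWithin_le_nhds
      have h1 : Tendsto (fun r : ℝ => f (r * circleMap 0 1 θ) *
          ((1 - (starRingEnd ℂ) a * (r * circleMap 0 1 θ)) / (r * circleMap 0 1 θ - a)))
          (nhdsWithin 1 (Iio 1)) (nhds (gs θ)) :=
        hθ.mul (((hid.const_mul _).const_sub 1).div (hid.sub_const a) (hζa θ))
      refine h1.congr' ?_
      have h2 : ∀ᶠ r : ℝ in nhdsWithin 1 (Iio 1), (r:ℂ) * circleMap 0 1 θ - a ≠ 0 :=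
        (hid.sub_const a).eventually_ne (hζa θ)
      filter_upwards [h2] with r hr
      exact (hg' _ (sub_ne_zero.1 hr)).symm
    · have : 0 < 1 - ‖a‖ := by linarith
      positivity
    · exact le_max_of_le_left hr00
    · exact max_lt hr01 (by linarith)
    · intro z hz hrz
      have hz1 : ‖z‖ < 1 := by simpa using hz
      have h1 : r0 ≤ ‖z‖ := (le_max_left _ _).trans hrz
      have h2 : (1 + ‖a‖) / 2 ≤ ‖z‖ := (le_max_right _ _).trans hrz
      have h3 : (1 - ‖a‖) / 2 ≤ ‖z - a‖ := by
        have := norm_sub_norm_le z a; linarith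
      have hp : 0 < (1 - ‖a‖) / 2 := by linarith
      have hza : z ≠ a := by
        rintro rfl; simp at h3; linarith
      have h4 : ‖1 - (starRingEnd ℂ) a * z‖ ≤ 2 := by
        refine (norm_sub_le _ _).trans ?_
        rw [norm_mul, Complex.norm_conj, norm_one]
        nlinarith [norm_nonneg z, norm_nonneg a]
      rw [hg' z hza, norm_mul, norm_div]
      calc _ ≤ (C * (1 + S z) ^ m) * (2 / ((1 - ‖a‖) / 2)) := by
            have h5 := hbd z hz h1
            gcongr
            exact (norm_nonneg _).trans h5
        _ = _ := by ring
  have hle : ∀ δ > 0, ‖g 0‖ ≤ Real.exp ((2 * Real.pi)⁻¹ * ∫ θ in (0:ℝ)..(2 * Real.pi),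
      Real.log (‖fs θ‖ + δ)) := by
    intro δ hδ
    have := qi_upper hS hg (z := 0) (by simp) hδ
    simpa only [qi_poisson_zero, one_mul, hgs] using this
  have hlim := (Real.continuous_exp.tendsto _).comp (qi_outer_lim hS hf ho).2
  have h1 : ‖g 0‖ ≤ ‖f 0‖ := by
    have := ge_of_tendsto' hlim (fun n => hle _ (by positivity : (0:ℝ) < 1 / ((n:ℝ) + 1)))
    rwa [Real.exp_log hf0] at this
  have h2 : ‖f 0‖ = ‖a‖ * ‖g 0‖ := by
    rw [hfq 0]; simp [g]
  nlinarith [norm_nonneg a, norm_nonneg (g 0)]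

lemma qi_compare {S : ℂ → ℝ} (hS : QIS S) {f N : ℂ → ℂ} {fs Ns : ℝ → ℂ} (hf : QIGood S f fs)
    (ho : QIOuter f fs) (hN : QIGood S N Ns)
    (hle : ∀ᵐ θ ∂(volume.restrict (Ioc (0:ℝ) (2 * Real.pi))), ‖Ns θ‖ ≤ ‖fs θ‖)
    {z : ℂ} (hz : z ∈ Metric.ball (0:ℂ) 1) : ‖N z‖ ≤ ‖f z‖ := by
  by_cases hNz : N z = 0
  · simp [hNz]
  have hzf := qi_zero_free hS hf ho
  have hN0 := norm_pos_iff.2 hNz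
  have hf0 := norm_pos_iff.2 (hzf z hz)
  obtain ⟨K, hK⟩ := qi_weight_le hz
  have hwc := qi_weight_cont hz
  have key : ∀ δ > 0, Real.log ‖N z‖ + (K * Real.log ‖f 0‖ - Real.log ‖f z‖) ≤
      K * ((2 * Real.pi)⁻¹ * ∫ θ in (0:ℝ)..(2 * Real.pi), Real.log (‖fs θ‖ + δ)) := by
    intro δ hδ
    have h1 := qi_upper hS hN hz hδ
    rw [← Real.log_le_iff_le_exp hN0] at h1
    have h2 := qi_lower hS hf hzf hz hδ hK
    have hi := qi_int hS hf hδ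
    have hi' := qi_int hS hN hδ
    have i1 := hi.continuousOn_mul hwc.continuousOn
    have i1' := hi'.continuousOn_mul hwc.continuousOn
    have i2 := hi.continuousOn_mul (g := fun θ => K - poissonKernel 0 z (circleMap 0 1 θ))
      (continuous_const.sub hwc).continuousOn
    have h3 : ∫ θ in (0:ℝ)..(2 * Real.pi), poissonKernel 0 z (circleMap 0 1 θ) * Real.log (‖Ns θ‖ + δ)
        ≤ ∫ θ in (0:ℝ)..(2 * Real.pi), poissonKernel 0 z (circleMap 0 1 θ) * Real.log (‖fs θ‖ + δ) := by
      rw [intervalIntegral.integral_of_le Real.two_pi_pos.le,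
        intervalIntegral.integral_of_le Real.two_pi_pos.le]
      refine integral_mono_ae i1'.1 i1.1 ?_
      filter_upwards [hle] with θ hθ
      have := qi_weight_nonneg hz θ
      have hp : 0 < ‖Ns θ‖ + δ := by positivity
      gcongr
    have h4 := mul_le_mul_of_nonneg_left h3 (inv_nonneg.2 Real.two_pi_pos.le)
    have h5 : ∫ θ in (0:ℝ)..(2 * Real.pi), K * Real.log (‖fs θ‖ + δ) =
        (∫ θ in (0:ℝ)..(2 * Real.pi), poissonKernel 0 z (circleMap 0 1 θ) * Real.log (‖fs θ‖ + δ)) +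
        ∫ θ in (0:ℝ)..(2 * Real.pi), (K - poissonKernel 0 z (circleMap 0 1 θ)) * Real.log (‖fs θ‖ + δ) := by
      rw [← intervalIntegral.integral_add i1 i2]
      congr 1; ext θ; ring
    rw [mul_left_comm, ← intervalIntegral.integral_const_mul, h5, mul_add]
    linarith
  have hlim := ((qi_outer_lim hS hf ho).2).const_mul K
  have := ge_of_tendsto' hlim (fun n => key _ (by positivity : (0:ℝ) < 1 / ((n:ℝ) + 1)))
  rw [← Real.log_le_log_iff hN0 hf0]
  linarith

lemma qi_orth {n N : ℕ} (h : n < N) :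
    ∫ θ in (0:ℝ)..(2 * Real.pi), circleMap 0 1 θ ^ n * (starRingEnd ℂ) (circleMap 0 1 θ ^ N) = 0 := by
  have hc : (((n:ℂ) - N) * I) ≠ 0 := by
    apply mul_ne_zero _ I_ne_zero
    rw [sub_ne_zero]
    exact_mod_cast h.ne
  have he : ∀ θ : ℝ, circleMap 0 1 θ ^ n * (starRingEnd ℂ) (circleMap 0 1 θ ^ N)
      = Complex.exp ((((n:ℂ) - N) * I) * θ) := by
    intro θ
    simp only [circleMap, zero_add, ofReal_one, one_mul, map_pow]
    rw [← Complex.exp_conj, ← Complex.exp_nat_mul, ← Complex.exp_nat_mul, ← Complex.exp_add]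
    congr 1
    simp
    ring
  simp only [he]
  rw [integral_exp_mul_complex hc]
  have : Complex.exp ((((n:ℂ) - N) * I) * ((2 * Real.pi : ℝ) : ℂ)) = 1 := by
    rw [Complex.exp_eq_one_iff]
    exact ⟨(n:ℤ) - N, by push_cast; ring⟩
  rw [this]; simp

lemma qi_parseval (c : ℕ → ℂ) (N : ℕ) :
    ∫ θ in (0:ℝ)..(2 * Real.pi), ‖∑ n ∈ Finset.range N, c n * circleMap 0 1 θ ^ n‖ ^ 2
      = 2 * Real.pi * ∑ n ∈ Finset.range N, ‖c n‖ ^ 2 := by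
  induction N with
  | zero => simp
  | succ N ih =>
    have hc := continuous_circleMap 0 1
    have e : ∀ θ : ℝ, ‖∑ n ∈ Finset.range (N + 1), c n * circleMap 0 1 θ ^ n‖ ^ 2 =
        ‖∑ n ∈ Finset.range N, c n * circleMap 0 1 θ ^ n‖ ^ 2 + (‖c N‖ ^ 2 +
          2 * (∑ n ∈ Finset.range N, (c n * (starRingEnd ℂ) (c N)) *
            (circleMap 0 1 θ ^ n * (starRingEnd ℂ) (circleMap 0 1 θ ^ N))).re) := by
      intro θ
      rw [Finset.sum_range_succ, ← Complex.normSq_eq_norm_sq, Complex.normSq_add,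
        Complex.normSq_eq_norm_sq, Complex.normSq_eq_norm_sq, norm_mul, norm_pow, add_assoc]
      congr 2
      · simp
      · rw [Finset.sum_mul]
        congr 2
        apply Finset.sum_congr rfl
        intro n _
        rw [map_mul]; ring
    simp only [e]
    have hz : ∫ θ in (0:ℝ)..(2 * Real.pi), (∑ n ∈ Finset.range N, (c n * (starRingEnd ℂ) (c N)) *
            (circleMap 0 1 θ ^ n * (starRingEnd ℂ) (circleMap 0 1 θ ^ N))).re = 0 := by
      have hint : ∀ n, IntervalIntegrable (fun θ : ℝ => (c n * (starRingEnd ℂ) (c N)) *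
            (circleMap 0 1 θ ^ n * (starRingEnd ℂ) (circleMap 0 1 θ ^ N))) volume 0 (2 * Real.pi) := by
        intro n
        apply Continuous.intervalIntegrable
        have := Complex.continuous_conj
        fun_prop
      have hint2 : IntervalIntegrable (fun θ : ℝ => ∑ n ∈ Finset.range N, (c n * (starRingEnd ℂ) (c N)) *
            (circleMap 0 1 θ ^ n * (starRingEnd ℂ) (circleMap 0 1 θ ^ N))) volume 0 (2 * Real.pi) := by
        apply Continuous.intervalIntegrable
        have := Complex.continuous_conj
        fun_prop
      have h2 := Complex.reCLM.intervalIntegral_comp_comm hint2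
      simp only [Complex.reCLM_apply] at h2
      rw [h2, intervalIntegral.integral_finsetSum (fun n _ => hint n)]
      rw [Finset.sum_eq_zero]
      · simp
      · intro n hn
        rw [intervalIntegral.integral_const_mul, qi_orth (Finset.mem_range.1 hn), mul_zero]
    have hcj := Complex.continuous_conj
    have i1 : IntervalIntegrable (fun θ : ℝ => ‖∑ n ∈ Finset.range N, c n * circleMap 0 1 θ ^ n‖ ^ 2)
        volume 0 (2 * Real.pi) := by
      apply Continuous.intervalIntegrable; fun_prop
    have i2 : IntervalIntegrable (fun θ : ℝ => 2 * (∑ n ∈ Finset.range N, (c n * (starRingEnd ℂ) (c N)) *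
            (circleMap 0 1 θ ^ n * (starRingEnd ℂ) (circleMap 0 1 θ ^ N))).re)
        volume 0 (2 * Real.pi) := by
      apply Continuous.intervalIntegrable
      have := Complex.continuous_re
      fun_prop
    have i3 : IntervalIntegrable (fun θ : ℝ => ‖c N‖ ^ 2) volume 0 (2 * Real.pi) := by simp
    rw [intervalIntegral.integral_add i1 (i3.add i2), intervalIntegral.integral_add i3 i2, ih,
      intervalIntegral.integral_const_mul, hz, Finset.sum_range_succ]
    simp
    ring

lemma qi_summable {a : ℕ → ℂ} {f : ℂ → ℂ}
    (hf : ∀ z ∈ Metric.ball (0:ℂ) 1, HasSum (fun n => z ^ n * a n) (f z)) {r : ℝ} (h0 : 0 ≤ r)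
    (h1 : r < 1) : Summable (fun n => ‖a n‖ * r ^ n) := by
  have := (hf (r:ℂ) (by simp [abs_of_nonneg h0, h1])).summable.norm
  refine this.congr (fun n => ?_)
  simp [abs_of_nonneg h0, mul_comm]

lemma qi_diff {a : ℕ → ℂ} {f : ℂ → ℂ}
    (hf : ∀ z ∈ Metric.ball (0:ℂ) 1, HasSum (fun n => z ^ n * a n) (f z)) :
    DifferentiableOn ℂ f (Metric.ball 0 1) := by
  intro z hz
  have hz1 : ‖z‖ < 1 := by simpa using hz
  obtain ⟨r, hr, hr1⟩ := exists_between hz1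
  have hr0 : 0 ≤ r := (norm_nonneg z).trans hr.le
  have h1 : DifferentiableOn ℂ (fun w => ∑' n, w ^ n * a n) (Metric.ball 0 r) := by
    refine Complex.differentiableOn_tsum_of_summable_norm (qi_summable hf hr0 hr1)
      (fun n => by fun_prop) Metric.isOpen_ball (fun n w hw => ?_)
    have : ‖w‖ < r := by simpa using hw
    rw [norm_mul, norm_pow, mul_comm]
    gcongr
  have h2 : DifferentiableOn ℂ f (Metric.ball 0 r) := h1.congr (fun w hw => by
    have hw' : ‖w‖ < r := by simpa using hw
    exact (hf w (by simp; linarith)).tsum_eq.symm)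
  exact (h2.differentiableAt (Metric.isOpen_ball.mem_nhds (by simpa using hr))).differentiableWithinAt

lemma qi_h2 {a : ℕ → ℂ} {f : ℂ → ℂ}
    (hf : ∀ z ∈ Metric.ball (0:ℂ) 1, HasSum (fun n => z ^ n * a n) (f z))
    (ha : Summable fun n => ‖a n‖ ^ 2) {r : ℝ} (h0 : 0 ≤ r) (h1 : r < 1) :
    ∫ θ in (0:ℝ)..(2 * Real.pi), ‖f (r * circleMap 0 1 θ)‖ ^ 2 ≤ 2 * Real.pi * ∑' n, ‖a n‖ ^ 2 := by
  have hs := qi_summable hf h0 h1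
  have hlim : Tendsto (fun N => ∫ θ in (0:ℝ)..(2 * Real.pi),
      ‖∑ n ∈ Finset.range N, (a n * r ^ n) * circleMap 0 1 θ ^ n‖ ^ 2) atTop
      (nhds (∫ θ in (0:ℝ)..(2 * Real.pi), ‖f (r * circleMap 0 1 θ)‖ ^ 2)) := by
    apply intervalIntegral.tendsto_integral_filter_of_dominated_convergence
      (fun _ => (∑' n, ‖a n‖ * r ^ n) ^ 2)
    · refine Eventually.of_forall fun N => Continuous.aestronglyMeasurable ?_
      have hc := continuous_circleMap 0 1
      fun_prop
    · refine Eventually.of_forall fun N => Eventually.of_forall fun θ _ => ?_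
      rw [Real.norm_of_nonneg (by positivity)]
      gcongr
      refine (norm_sum_le _ _).trans ?_
      refine le_trans (le_of_eq ?_) (hs.sum_le_tsum (Finset.range N) (fun n _ => by positivity))
      apply Finset.sum_congr rfl
      intro n _
      simp [abs_of_nonneg h0]
    · simp
    · refine Eventually.of_forall fun θ _ => ?_
      have := (hf _ (qi_mem h0 h1 θ)).tendsto_sum_nat
      refine (this.norm.pow 2).congr (fun N => ?_)
      congr 2
      apply Finset.sum_congr rfl
      intro n _
      rw [mul_pow]; ring
  refine le_of_tendsto' hlim (fun N => ?_)
  rw [qi_parseval]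
  gcongr
  refine le_trans (Finset.sum_le_sum fun n _ => ?_) (ha.sum_le_tsum (Finset.range N) (fun n _ => by positivity))
  rw [norm_mul, norm_pow, Complex.norm_real, Real.norm_of_nonneg h0, mul_pow]
  have : (r ^ n) ^ 2 ≤ 1 := pow_le_one₀ (by positivity) (pow_le_one₀ h0 h1.le)
  nlinarith [sq_nonneg ‖a n‖]

lemma qi_det_diff {d : ℕ} {M : ℂ → Matrix (Fin d) (Fin d) ℂ} {s : Set ℂ}
    (h : ∀ i j, DifferentiableOn ℂ (fun z => M z i j) s) :
    DifferentiableOn ℂ (fun z => (M z).det) s := by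
  simp only [Matrix.det_apply]
  refine DifferentiableOn.fun_sum fun σ _ => ?_
  refine DifferentiableOn.const_smul (DifferentiableOn.fun_finsetProd fun i _ => h _ _) _

lemma qi_det_bound {d : ℕ} {M : Matrix (Fin d) (Fin d) ℂ} {x : ℝ} (h : ∀ i j, ‖M i j‖ ≤ x) :
    ‖M.det‖ ≤ (Nat.factorial d : ℝ) * x ^ d := by
  have := Matrix.det_le (A := M) (abv := NormedField.toAbsoluteValue ℂ) (x := x) h
  rw [nsmul_eq_mul, Fintype.card_fin] at this
  exact this

lemma qi_adj_diff {d : ℕ} {M : ℂ → Matrix (Fin d) (Fin d) ℂ} {s : Set ℂ}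
    (h : ∀ i j, DifferentiableOn ℂ (fun z => M z i j) s) (i j : Fin d) :
    DifferentiableOn ℂ (fun z => (M z).adjugate i j) s := by
  simp only [Matrix.adjugate_apply]
  apply qi_det_diff
  intro k l
  by_cases hk : k = j
  · subst hk; simp
  · simpa [Matrix.updateRow_ne hk] using h k l

lemma qi_adj_bound {d : ℕ} {M : Matrix (Fin d) (Fin d) ℂ} {x : ℝ} (hx : 1 ≤ x)
    (h : ∀ i j, ‖M i j‖ ≤ x) (i j : Fin d) :
    ‖M.adjugate i j‖ ≤ (Nat.factorial d : ℝ) * x ^ d := by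
  rw [Matrix.adjugate_apply]
  apply qi_det_bound
  intro k l
  by_cases hk : k = j
  · subst hk
    rw [Matrix.updateRow_self]
    by_cases hl : l = i
    · subst hl; simpa using hx
    · simp [hl]; linarith
  · simpa [Matrix.updateRow_ne hk] using h k l

lemma qi_circleMap (θ : ℝ) : Complex.exp ((θ : ℂ) * Complex.I) = circleMap 0 1 θ := by
  simp [circleMap]

lemma qi_tendsto_det {d : ℕ} {l : Filter ℝ} {f : ℝ → Matrix (Fin d) (Fin d) ℂ}
    {M : Matrix (Fin d) (Fin d) ℂ} (h : Tendsto f l (nhds M)) :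
    Tendsto (fun r => (f r).det) l (nhds M.det) := by
  have h2 : Continuous (fun M : Matrix (Fin d) (Fin d) ℂ => M.det) := continuous_id.matrix_det
  exact (h2.tendsto M).comp h

lemma qi_tendsto_adj {d : ℕ} {l : Filter ℝ} {f g : ℝ → Matrix (Fin d) (Fin d) ℂ}
    {M P : Matrix (Fin d) (Fin d) ℂ} (h : Tendsto f l (nhds M)) (h' : Tendsto g l (nhds P))
    (i j : Fin d) :
    Tendsto (fun r => ((f r).adjugate * g r) i j) l (nhds ((M.adjugate * P) i j)) := by
  have ha : Continuous (fun M : Matrix (Fin d) (Fin d) ℂ => M.adjugate) :=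
    continuous_id.matrix_adjugate
  have h1 : Tendsto (fun r => (f r).adjugate) l (nhds M.adjugate) := (ha.tendsto M).comp h
  simp only [Matrix.mul_apply]
  refine tendsto_finsetSum _ fun k _ => ?_
  exact (tendsto_pi_nhds.1 (tendsto_pi_nhds.1 h1 i) k).mul
    (tendsto_pi_nhds.1 (tendsto_pi_nhds.1 h' k) j)

set_option maxHeartbeats 4000000 in
/-- Let `F, G ∈ H₂^{d×d}` (matrix Taylor coefficients `A`, `B`, with each entry
in `H₂`) have entrywise radial boundary values `FStar`, `GStar` with
`F* (F*)ᴴ = G* (G*)ᴴ` a.e. on `[0, 2π)`, and suppose `F` is outer, i.e. `det F`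
is an outer function: `|det F 0| = exp((2π)⁻¹ ∫₀^{2π} log |det F*(e^{iθ})| dθ)`
(so that in particular `det F z ≠ 0` and `F z` is invertible on the disk).
Then the matrix function `U z = (F z)⁻¹ * G z` is analytic on the disk, belongs
to `H_∞^{d×d}`, and is an inner matrix function: its boundary values satisfy
`U* (U*)ᴴ = I` a.e. -/
theorem quotient_is_inner {d : ℕ}
    (F G : ℂ → Matrix (Fin d) (Fin d) ℂ)
    (A B : ℕ → Matrix (Fin d) (Fin d) ℂ)
    (FStar GStar : ℝ → Matrix (Fin d) (Fin d) ℂ)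
    (hFA : ∀ z ∈ Metric.ball (0 : ℂ) 1, HasSum (fun n : ℕ => z ^ n • A n) (F z))
    (hGB : ∀ z ∈ Metric.ball (0 : ℂ) 1, HasSum (fun n : ℕ => z ^ n • B n) (G z))
    (hA2 : ∀ i j, Summable fun n : ℕ => ‖A n i j‖ ^ 2)
    (hB2 : ∀ i j, Summable fun n : ℕ => ‖B n i j‖ ^ 2)
    (hFStar : ∀ᵐ (θ : ℝ) ∂(volume.restrict (Ico (0 : ℝ) (2 * Real.pi))),
      ∀ i j, Tendsto (fun r : ℝ => F ((r : ℂ) * Complex.exp ((θ : ℂ) * Complex.I)) i j)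
        (nhdsWithin 1 (Iio 1)) (nhds (FStar θ i j)))
    (hGStar : ∀ᵐ (θ : ℝ) ∂(volume.restrict (Ico (0 : ℝ) (2 * Real.pi))),
      ∀ i j, Tendsto (fun r : ℝ => G ((r : ℂ) * Complex.exp ((θ : ℂ) * Complex.I)) i j)
        (nhdsWithin 1 (Iio 1)) (nhds (GStar θ i j)))
    (hmod : ∀ᵐ (θ : ℝ) ∂(volume.restrict (Ico (0 : ℝ) (2 * Real.pi))),
      FStar θ * (FStar θ)ᴴ = GStar θ * (GStar θ)ᴴ)
    (houter : ‖(F 0).det‖ =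
      Real.exp ((2 * Real.pi)⁻¹ *
        ∫ θ in (0 : ℝ)..(2 * Real.pi), Real.log ‖(FStar θ).det‖)) :
    (∀ i j, DifferentiableOn ℂ (fun z => ((F z)⁻¹ * G z) i j) (Metric.ball (0 : ℂ) 1)) ∧
    (∃ C : ℝ, ∀ z ∈ Metric.ball (0 : ℂ) 1, ∀ i j, ‖((F z)⁻¹ * G z) i j‖ ≤ C) ∧
    (∃ UStar : ℝ → Matrix (Fin d) (Fin d) ℂ,
      (∀ᵐ (θ : ℝ) ∂(volume.restrict (Ico (0 : ℝ) (2 * Real.pi))),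
        ∀ i j, Tendsto
          (fun r : ℝ =>
            ((F ((r : ℂ) * Complex.exp ((θ : ℂ) * Complex.I)))⁻¹ *
              G ((r : ℂ) * Complex.exp ((θ : ℂ) * Complex.I))) i j)
          (nhdsWithin 1 (Iio 1)) (nhds (UStar θ i j))) ∧
      (∀ᵐ (θ : ℝ) ∂(volume.restrict (Ico (0 : ℝ) (2 * Real.pi))),
        UStar θ * (UStar θ)ᴴ = (1 : Matrix (Fin d) (Fin d) ℂ))) := by
  rw [restrict_Ico_eq_restrict_Ioc] at *
  simp only [qi_circleMap] at *
  have hF : ∀ i j, ∀ z ∈ Metric.ball (0:ℂ) 1, HasSum (fun n => z ^ n * A n i j) (F z i j) :=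
    fun i j z hz => Pi.hasSum.1 (Pi.hasSum.1 (hFA z hz) i) j
  have hG : ∀ i j, ∀ z ∈ Metric.ball (0:ℂ) 1, HasSum (fun n => z ^ n * B n i j) (G z i j) :=
    fun i j z hz => Pi.hasSum.1 (Pi.hasSum.1 (hGB z hz) i) j
  have hFd := fun i j => qi_diff (hF i j)
  have hGd := fun i j => qi_diff (hG i j)
  let S : ℂ → ℝ := fun z => ∑ i, ∑ j, (‖F z i j‖ ^ 2 + ‖G z i j‖ ^ 2)
  have hS0 : ∀ z, 0 ≤ S z := fun z => by positivity
  have hS : QIS S := by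
    refine ⟨?_, hS0, ∑ i, ∑ j, (2 * Real.pi * ∑' n, ‖A n i j‖ ^ 2 + 2 * Real.pi * ∑' n, ‖B n i j‖ ^ 2),
      fun r h0 h1 => ?_⟩
    · refine continuousOn_finsetSum _ fun i _ => continuousOn_finsetSum _ fun j _ => ?_
      exact ((hFd i j).continuousOn.norm.pow 2).add ((hGd i j).continuousOn.norm.pow 2)
    · have hc : ∀ {f : ℂ → ℂ}, DifferentiableOn ℂ f (Metric.ball 0 1) →
          IntervalIntegrable (fun θ : ℝ => ‖f (r * circleMap 0 1 θ)‖ ^ 2) volume 0 (2 * Real.pi) := by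
        intro f hf
        apply Continuous.intervalIntegrable
        exact (hf.continuousOn.comp_continuous (by fun_prop) (fun θ => qi_mem h0 h1 θ)).norm.pow 2
      have hc1 : ∀ i j, IntervalIntegrable (fun θ : ℝ => ‖F (r * circleMap 0 1 θ) i j‖ ^ 2
          + ‖G (r * circleMap 0 1 θ) i j‖ ^ 2) volume 0 (2 * Real.pi) :=
        fun i j => (hc (hFd i j)).add (hc (hGd i j))
      simp only [S]
      rw [intervalIntegral.integral_finsetSum (fun i _ => by
        have h := IntervalIntegrable.sum Finset.univ (fun j _ => hc1 i j)
        have he : (∑ j, fun θ : ℝ => ‖F (r * circleMap 0 1 θ) i j‖ ^ 2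
          + ‖G (r * circleMap 0 1 θ) i j‖ ^ 2) = fun θ : ℝ => ∑ j, (‖F (r * circleMap 0 1 θ) i j‖ ^ 2
          + ‖G (r * circleMap 0 1 θ) i j‖ ^ 2) := by
          ext θ; rw [Finset.sum_apply]
        rw [← he]; exact h)]
      refine Finset.sum_le_sum fun i _ => ?_
      rw [intervalIntegral.integral_finsetSum (fun j _ => hc1 i j)]
      refine Finset.sum_le_sum fun j _ => ?_
      rw [intervalIntegral.integral_add (hc (hFd i j)) (hc (hGd i j))]
      exact add_le_add (qi_h2 (hF i j) (hA2 i j) h0 h1) (qi_h2 (hG i j) (hB2 i j) h0 h1)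
  have hterm : ∀ z i j, ‖F z i j‖ ^ 2 + ‖G z i j‖ ^ 2 ≤ S z := by
    intro z i j
    have h1 := Finset.single_le_sum (f := fun j => ‖F z i j‖ ^ 2 + ‖G z i j‖ ^ 2)
      (fun j _ => by positivity) (Finset.mem_univ j)
    have h2 := Finset.single_le_sum (f := fun i => ∑ j, (‖F z i j‖ ^ 2 + ‖G z i j‖ ^ 2))
      (fun j _ => by positivity) (Finset.mem_univ i)
    exact h1.trans h2
  have hFb : ∀ z i j, ‖F z i j‖ ≤ 1 + S z := fun z i j => by
    nlinarith [hterm z i j, sq_nonneg (‖F z i j‖ - 1), sq_nonneg ‖G z i j‖, sq_nonneg ‖F z i j‖]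
  have hGb : ∀ z i j, ‖G z i j‖ ≤ 1 + S z := fun z i j => by
    nlinarith [hterm z i j, sq_nonneg (‖G z i j‖ - 1), sq_nonneg ‖F z i j‖, sq_nonneg ‖G z i j‖]
  have hFlim : ∀ᵐ (θ : ℝ) ∂(volume.restrict (Ioc (0 : ℝ) (2 * Real.pi))),
      Tendsto (fun r : ℝ => F (r * circleMap 0 1 θ)) (nhdsWithin 1 (Iio 1)) (nhds (FStar θ)) := by
    filter_upwards [hFStar] with θ hθ
    exact tendsto_pi_nhds.2 fun i => tendsto_pi_nhds.2 fun j => hθ i j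
  have hGlim : ∀ᵐ (θ : ℝ) ∂(volume.restrict (Ioc (0 : ℝ) (2 * Real.pi))),
      Tendsto (fun r : ℝ => G (r * circleMap 0 1 θ)) (nhdsWithin 1 (Iio 1)) (nhds (GStar θ)) := by
    filter_upwards [hGStar] with θ hθ
    exact tendsto_pi_nhds.2 fun i => tendsto_pi_nhds.2 fun j => hθ i j
  have hdetlim : ∀ᵐ (θ : ℝ) ∂(volume.restrict (Ioc (0 : ℝ) (2 * Real.pi))),
      Tendsto (fun r : ℝ => (F (r * circleMap 0 1 θ)).det) (nhdsWithin 1 (Iio 1))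
        (nhds (FStar θ).det) := by
    filter_upwards [hFlim] with θ hθ
    exact qi_tendsto_det hθ
  have hNlim : ∀ᵐ (θ : ℝ) ∂(volume.restrict (Ioc (0 : ℝ) (2 * Real.pi))), ∀ i j,
      Tendsto (fun r : ℝ => ((F (r * circleMap 0 1 θ)).adjugate * G (r * circleMap 0 1 θ)) i j)
        (nhdsWithin 1 (Iio 1)) (nhds (((FStar θ).adjugate * GStar θ) i j)) := by
    filter_upwards [hFlim, hGlim] with θ hθ hθ' i j
    exact qi_tendsto_adj hθ hθ' i j
  have hfgood : QIGood S (fun z => (F z).det) (fun θ => (FStar θ).det) :=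
    ⟨qi_det_diff hFd, hdetlim, Nat.factorial d, d, 0, by positivity, le_rfl, one_pos,
      fun z _ _ => qi_det_bound (hFb z)⟩
  have ho : QIOuter (fun z => (F z).det) (fun θ => (FStar θ).det) := houter
  have hNgood : ∀ i j, QIGood S (fun z => ((F z).adjugate * G z) i j)
      (fun θ => ((FStar θ).adjugate * GStar θ) i j) := by
    intro i j
    refine ⟨?_, hNlim.mono fun θ hθ => hθ i j, d * Nat.factorial d, d + 1, 0, by positivity,
      le_rfl, one_pos, fun z _ _ => ?_⟩
    · simp only [Matrix.mul_apply]
      exact DifferentiableOn.fun_sum fun k _ => (qi_adj_diff hFd i k).mul (hGd k j)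
    · change ‖((F z).adjugate * G z) i j‖ ≤ _
      rw [Matrix.mul_apply]
      have hx : 1 ≤ 1 + S z := by linarith [hS0 z]
      calc _ ≤ ∑ k : Fin d, ((Nat.factorial d : ℝ) * (1 + S z) ^ d) * (1 + S z) := by
            refine norm_sum_le_of_le _ fun k _ => ?_
            rw [norm_mul]
            exact mul_le_mul (qi_adj_bound hx (hFb z) i k) (hGb z k j) (norm_nonneg _)
              (by positivity)
        _ = _ := by simp; ring
  have hinv : ∀ (M P : Matrix (Fin d) (Fin d) ℂ) i j, (M⁻¹ * P) i j = M.det⁻¹ * (M.adjugate * P) i j := by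
    intro M P i j
    rw [Matrix.inv_def, Ring.inverse_eq_inv', Matrix.smul_mul, Matrix.smul_apply, smul_eq_mul]
  have hne := (qi_outer_lim hS hfgood ho).1
  have hzf := qi_zero_free hS hfgood ho
  have hunit : ∀ᵐ (θ : ℝ) ∂(volume.restrict (Ioc (0 : ℝ) (2 * Real.pi))),
      ((FStar θ)⁻¹ * GStar θ) * ((FStar θ)⁻¹ * GStar θ)ᴴ = (1 : Matrix (Fin d) (Fin d) ℂ) := by
    filter_upwards [hmod, hne] with θ h1 h2
    have hu : IsUnit (FStar θ).det := isUnit_iff_ne_zero.2 h2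
    have hu' : IsUnit ((FStar θ)ᴴ).det := by
      rw [Matrix.det_conjTranspose]; exact hu.star
    rw [Matrix.conjTranspose_mul, Matrix.conjTranspose_nonsing_inv, Matrix.mul_assoc,
      ← Matrix.mul_assoc (GStar θ), ← h1, Matrix.mul_assoc (FStar θ), Matrix.mul_nonsing_inv _ hu',
      Matrix.mul_one, Matrix.nonsing_inv_mul _ hu]
  have hle : ∀ i j, ∀ᵐ (θ : ℝ) ∂(volume.restrict (Ioc (0 : ℝ) (2 * Real.pi))),
      ‖((FStar θ).adjugate * GStar θ) i j‖ ≤ ‖(FStar θ).det‖ := by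
    intro i j
    filter_upwards [hunit, hne] with θ h1 h2
    have h3 := entry_norm_bound_of_unitary (U := (FStar θ)⁻¹ * GStar θ)
      (Matrix.mem_unitaryGroup_iff.2 h1) i j
    rw [hinv, norm_mul, norm_inv, inv_mul_le_iff₀ (norm_pos_iff.2 h2), mul_one] at h3
    exact h3
  refine ⟨fun i j => ?_, ⟨1, fun z hz i j => ?_⟩, fun θ => (FStar θ)⁻¹ * GStar θ, ?_, hunit⟩
  · simp only [hinv]
    exact (hfgood.1.inv hzf).mul (hNgood i j).1
  · rw [hinv, norm_mul, norm_inv, inv_mul_le_iff₀ (norm_pos_iff.2 (hzf z hz)), mul_one]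
    exact qi_compare hS hfgood ho (hNgood i j) (hle i j) hz
  · filter_upwards [hdetlim, hNlim, hne] with θ h1 h2 h3 i j
    simp only [hinv]
    exact (h1.inv₀ h3).mul (h2 i j)
end
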